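/- arXiv:2109.03168 — 3 statements merged into one kernel-verified Lean document; each statement's English description precedes it below -/
import Mathlib

section
/- The Construction-1 packet-level code C_{(a,a(r+1)−1,r)} over F_Q is an (a, a(r+1)−1, r) locally recoverable streaming code of rate r/(r+1); i.e., it is simultaneously an (a, a(r+1)−1) SC and a (1,r) SC, and its rate r/(r+1) matches the upper bound min{(a(r+1)−a)/(a(r+1)), r/(r+1)} = r/(r+1), so it is rate-optimal. -/
/-- A packet-level code with a causal systematic encoder: the parity part of the
coded packet at time `t` is a fixed function of the message packets at times `≤ t`. -/
structure PacketCode (F : Type) (k n : ℕ) where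
  parity : (ℤ → Fin k → F) → ℤ → Fin (n - k) → F
  causal : ∀ (m m' : ℤ → Fin k → F) (t : ℤ),
    (∀ t' ≤ t, m t' = m' t') → parity m t = parity m' t

/-- A valid message stream vanishes at negative times. -/
def IsMsgStream {F : Type} [Zero F] {k : ℕ} (m : ℤ → Fin k → F) : Prop :=
  ∀ t < 0, m t = 0

/-- `(a, τ)` streaming-code property. -/
def IsSC {F : Type} [Zero F] {k n : ℕ} (C : PacketCode F k n) (a τ : ℕ) : Prop :=
  ∀ m m' : ℤ → Fin k → F, IsMsgStream m → IsMsgStream m' →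
    ∀ t : ℤ, 0 ≤ t →
      ∀ E : Finset ℤ, (∀ x ∈ E, t ≤ x ∧ x ≤ t + τ) → t ∈ E → E.card ≤ a →
        (∀ t' < t, m t' = m' t') →
        (∀ t' : ℤ, t ≤ t' → t' ≤ t + τ → t' ∉ E →
          m t' = m' t' ∧ C.parity m t' = C.parity m' t') →
        m t = m' t

/-- `(a, τ, r)` locally recoverable streaming code. -/
def IsLRSC {F : Type} [Zero F] {k n : ℕ} (C : PacketCode F k n) (a τ r : ℕ) : Prop :=
  IsSC C a τ ∧ IsSC C 1 r
/-- Every square submatrix of `M` is nonsingular. -/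
def AllSquareSubmatricesNonsingular {K : Type} [Field K] {r a : ℕ}
    (M : Matrix (Fin r) (Fin a) K) : Prop :=
  ∀ (z : ℕ) (ρ : Fin z → Fin r) (σ : Fin z → Fin a),
    Function.Injective ρ → Function.Injective σ → (M.submatrix ρ σ).det ≠ 0

/-- `Γ = C ⬝ diag(α₀,…,α_{a-1})`, i.e. the `j`-th column of `C` scaled by `α j`. -/
def gammaMatrix {K : Type} [Field K] {r a : ℕ} (C : Matrix (Fin r) (Fin a) K)
    (α : Fin a → K) : Matrix (Fin r) (Fin a) K :=
  Matrix.of fun i j => C i j * α j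
/-- Construction 1: the packet-level code with `k = r`, `n = r+1` and parity
`p₀(t) = Σ_{j=0}^{a-1} \hat m(t - r - j(r+1)) · Γ_j`, where
`\hat m(s) = (m_0(s), m_1(s+1), …, m_{r-1}(s+r-1))`. -/
def construction1 {K : Type} [Field K] {r a : ℕ} (Γ : Matrix (Fin r) (Fin a) K) :
    PacketCode K r (r + 1) where
  parity := fun m t _ => ∑ j : Fin a, ∑ i : Fin r,
    Γ i j * m (t - (r : ℤ) - ((j : ℕ) : ℤ) * ((r : ℤ) + 1) + ((i : ℕ) : ℤ)) i
  causal := by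
    intro m m' t h
    funext s
    refine Finset.sum_congr rfl fun j _ => Finset.sum_congr rfl fun i _ => ?_
    have h1 : (0 : ℤ) ≤ ((j : ℕ) : ℤ) * ((r : ℤ) + 1) := by positivity
    have h2 : ((i : ℕ) : ℤ) < (r : ℤ) := by exact_mod_cast i.isLt
    rw [h (t - (r : ℤ) - ((j : ℕ) : ℤ) * ((r : ℤ) + 1) + ((i : ℕ) : ℤ)) (by linarith)]

/-!
A diagonal `m_0(s), m_1(s + 1), …` of the stream splits into blocks of `r` message symbols followed
by one parity, and the parity of block `c` involves only the blocks `b ≤ c`, with coefficients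
`Γ i (c - b)`. Erasing `a` packets of a window erases at most `a` symbols of each diagonal, so at
least as many parities survive as message symbols are lost. Recovering the first block then amounts
to the nonsingularity of a block staircase matrix, for the blocks up to the first one by which the
surviving parities have caught up with the erased symbols; minimality of that block gives Hall's
condition.

In the last parity of such a matrix the first block carries a scalar `α d` outside the field
generated by the other entries (up to column scalings), so the determinant is `α d * x + y` with
`x`, `y` in that field, and it suffices that `x ≠ 0`: the parity may be truncated to the first
block. Truncation keeps Hall's condition until it is tight at some block; there the matrix is block
triangular and one splits it. A single remaining block is a submatrix of `Γ`.
-/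

section LinearAlgebra

open Matrix

variable {K ι κ : Type*} [Field K]

theorem linearIndependent_row_iff_det_submatrix_ne_zero {n : Type*} [Fintype n] [DecidableEq n]
    (M : Matrix ι κ K) (e : n ≃ ι) (e' : n ≃ κ) :
    LinearIndependent K M.row ↔ (M.submatrix e e').det ≠ 0 := by
  have row_eq : (M.submatrix e e').row = LinearEquiv.funCongrLeft K K e' ∘ M.row ∘ e := rfl
  rw [← isUnit_iff_ne_zero, ← isUnit_iff_isUnit_det, ← linearIndependent_rows_iff_isUnit, row_eq,
    ← linearIndependent_equiv e]
  exact ((LinearEquiv.funCongrLeft K K e').toLinearMap.linearIndependent_iff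
    (LinearEquiv.ker _)).symm

theorem linearIndependent_row_of_toBlock {R : Type*} [Ring R] [Finite ι] {M : Matrix ι κ R}
    {p : ι → Prop} {q : κ → Prop} (hzero : ∀ i j, ¬ p i → q j → M i j = 0)
    (hpq : LinearIndependent R (M.toBlock p q).row)
    (hnot : LinearIndependent R (M.toBlock (¬ p ·) (¬ q ·)).row) :
    LinearIndependent R M.row := by
  classical
  cases nonempty_fintype ι
  rw [Fintype.linearIndependent_iff] at hpq hnot ⊢
  intro x hx
  have sum_split (j : κ) : ∑ i : {i // p i}, x i * M i j + ∑ i : {i // ¬ p i}, x i * M i j = 0 := by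
    rw [Fintype.sum_subtype_add_sum_subtype p fun i => x i * M i j]
    simpa using congrFun hx j
  have eq_zero_of_p (i : {i // p i}) : x i = 0 := by
    refine hpq (fun i => x i) (funext fun j => ?_) i
    have lower_zero : ∑ i : {i // ¬ p i}, x i * M i j = 0 :=
      Finset.sum_eq_zero fun i _ => by rw [hzero i j i.2 j.2, mul_zero]
    simpa [lower_zero] using sum_split j
  have eq_zero_of_not_p (i : {i // ¬ p i}) : x i = 0 := by
    refine hnot (fun i => x i) (funext fun j => ?_) i
    simpa [eq_zero_of_p] using sum_split j
  intro i
  by_cases hi : p i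
  · exact eq_zero_of_p ⟨i, hi⟩
  · exact eq_zero_of_not_p ⟨i, hi⟩

theorem det_mem_subring {R S : Type*} [CommRing R] [SetLike S R] [SubringClass S R] [Fintype ι]
    [DecidableEq ι] (s : S) {A : Matrix ι ι R} (hA : ∀ i j, A i j ∈ s) : A.det ∈ s := by
  rw [det_apply]
  refine sum_mem fun σ _ => ?_
  rw [Units.smul_def]
  exact zsmul_mem (prod_mem fun i _ => hA _ _) _

-- By linearity in column `j₀` the determinant is `θ * det [v] + det [w]`; after rescaling the other
-- columns both determinants lie in `F`, so its vanishing would put `θ` into `F`.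
theorem det_updateCol_smul_add_ne_zero [Fintype ι] [DecidableEq ι] (F : Subfield K)
    {A : Matrix ι ι K} {j₀ : ι} {v w : ι → K} {θ : K}
    (hA : ∀ j ≠ j₀, ∃ s ≠ 0, ∀ i, s * A i j ∈ F) (hv : ∀ i, v i ∈ F) (hw : ∀ i, w i ∈ F)
    (hθ : θ ∉ F) (hdet : (A.updateCol j₀ (θ • v)).det ≠ 0) :
    (A.updateCol j₀ (θ • v + w)).det ≠ 0 := by
  have exists_scale (j : ι) : ∃ s ≠ 0, ∀ i, s * (A.updateCol j₀ 1) i j ∈ F := by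
    obtain rfl | hj := eq_or_ne j j₀
    · exact ⟨1, one_ne_zero, by simp⟩
    · simpa [hj] using hA j hj
  choose s s_ne_zero hs using exists_scale
  have scaled_det_mem (u : ι → K) (hu : ∀ i, u i ∈ F) :
      (∏ j, s j) * (A.updateCol j₀ u).det ∈ F := by
    rw [← det_mul_row]
    refine det_mem_subring F fun i j => ?_
    obtain rfl | hj := eq_or_ne j j₀
    · simpa using mul_mem (hs j i) (hu i)
    · simpa [hj] using hs j i
  rw [det_updateCol_smul] at hdet
  rw [det_updateCol_add, det_updateCol_smul]
  intro hzero
  have scale_ne_zero : ∏ j, s j ≠ 0 := Finset.prod_ne_zero_iff.2 fun j _ => s_ne_zero j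
  have det_v_ne_zero := right_ne_zero_of_mul hdet
  have θ_eq : θ =
      -((∏ j, s j) * (A.updateCol j₀ w).det) / ((∏ j, s j) * (A.updateCol j₀ v).det) := by
    field_simp
    linear_combination hzero
  exact hθ (θ_eq ▸ div_mem (neg_mem (scaled_det_mem w hw)) (scaled_det_mem v hv))

theorem linearIndependent_row_updateCol_smul_add [Fintype ι] [Fintype κ] [DecidableEq κ]
    (F : Subfield K) {M : Matrix ι κ K} {j₀ : κ} {v w : ι → K} {θ : K}
    (hcard : Fintype.card ι = Fintype.card κ)
    (hM : ∀ j ≠ j₀, ∃ s ≠ 0, ∀ i, s * M i j ∈ F) (hv : ∀ i, v i ∈ F) (hw : ∀ i, w i ∈ F)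
    (hθ : θ ∉ F) (hind : LinearIndependent K (M.updateCol j₀ (θ • v)).row) :
    LinearIndependent K (M.updateCol j₀ (θ • v + w)).row := by
  let e : κ ≃ ι := (Fintype.equivOfCardEq hcard).symm
  have submatrix_updateCol (u : ι → K) :
      (M.updateCol j₀ u).submatrix e (Equiv.refl κ) =
        (M.submatrix e (Equiv.refl κ)).updateCol j₀ (u ∘ e) := by
    rw [submatrix_updateCol_equiv]
    rfl
  rw [linearIndependent_row_iff_det_submatrix_ne_zero _ e (Equiv.refl κ), submatrix_updateCol]
    at hind ⊢
  exact det_updateCol_smul_add_ne_zero F (v := v ∘ e) (w := w ∘ e)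
    (fun j hj => (hM j hj).imp fun s hs => ⟨hs.1, fun i => hs.2 (e i)⟩)
    (fun i => hv (e i)) (fun i => hw (e i)) hθ hind

end LinearAlgebra

section CountLE

open Finset

variable {ι κ β : Type*} [Fintype ι] [LinearOrder β]

/-- The number of indices at which `f` is at most `B`; comparing these numbers for all `B` compares
two finite families in the order underlying Hall's condition. -/
def countLE (f : ι → β) (B : β) : ℕ :=
  #{i | f i ≤ B}

theorem countLE_le_card (f : ι → β) (B : β) : countLE f B ≤ Fintype.card ι :=
  card_le_univ _

theorem countLE_mono (f : ι → β) : Monotone (countLE f) := fun _ _ h =>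
  card_le_card (monotone_filter_right _ fun _ _ hi => le_trans hi h)

theorem countLE_eq_card_iff {f : ι → β} {B : β} :
    countLE f B = Fintype.card ι ↔ ∀ i, f i ≤ B := by
  simp [countLE, card_eq_iff_eq_univ, eq_univ_iff_forall]

theorem countLE_pos_iff {f : ι → β} {B : β} : 0 < countLE f B ↔ ∃ i, f i ≤ B := by
  simp [countLE, card_pos, Finset.Nonempty]

theorem countLE_subtype (f : ι → β) (p : ι → Prop) [DecidablePred p] (B : β) :
    countLE (fun i : {i // p i} => f i) B = #{i | p i ∧ f i ≤ B} := by
  rw [countLE, ← card_map (Function.Embedding.subtype p)]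
  congr 1
  ext i
  simp [and_comm]

theorem countLE_restrict_le (f : ι → β) (B B' : β) :
    countLE (fun i : {i // f i ≤ B} => f i) B' = countLE f (min B B') := by
  rw [countLE_subtype f (f · ≤ B), countLE]
  simp only [le_min_iff]

theorem countLE_restrict_not_le_add (f : ι → β) (B B' : β) :
    countLE (fun i : {i // ¬ f i ≤ B} => f i) B' + countLE f (min B B') = countLE f B' := by
  rw [← countLE_restrict_le, countLE_subtype, countLE_subtype, add_comm, countLE,
    ← card_filter_add_card_filter_not (s := {i | f i ≤ B'}) (f · ≤ B)]
  simp [filter_filter, and_comm]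

theorem countLE_update_of_iff [DecidableEq ι] {f : ι → β} {i : ι} {b B : β}
    (h : b ≤ B ↔ f i ≤ B) : countLE (Function.update f i b) B = countLE f B := by
  refine congrArg card (filter_congr fun i' _ => ?_)
  obtain rfl | hi := eq_or_ne i' i <;> simp [*]

theorem countLE_update_le [DecidableEq ι] (f : ι → β) (i : ι) (b B : β) :
    countLE (Function.update f i b) B ≤ countLE f B + 1 := by
  refine (card_le_card fun i' hi' => ?_).trans (card_insert_le i {i' | f i' ≤ B})
  obtain rfl | hi := eq_or_ne i' i <;> simp_all

theorem countLE_le_countLE_add_one {a : ℕ} {g : ι → Fin a} (hg : g.Injective) {B B' : Fin a}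
    (hB : (B : ℕ) ≤ B' + 1) : countLE g B ≤ countLE g B' + 1 := by
  classical
  have card_eq_le_one : #{j | g j = B} ≤ 1 :=
    card_le_one.2 fun j hj j' hj' => hg <|
      (mem_filter_univ j).1 hj |>.trans ((mem_filter_univ j').1 hj').symm
  calc countLE g B ≤ #(({j | g j ≤ B'} : Finset ι) ∪ ({j | g j = B} : Finset ι)) := by
        refine card_le_card fun j hj => ?_
        simp only [mem_union, mem_filter_univ] at hj ⊢
        lia
    _ ≤ countLE g B' + 1 := (card_union_le _ _).trans (Nat.add_le_add_left card_eq_le_one _)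

theorem exists_countLE_eq {a : ℕ} [NeZero a] [Fintype κ] {f : ι → Fin a} {g : κ → Fin a}
    (hg : g.Injective) (hcard : Fintype.card ι ≤ Fintype.card κ) {i₀ : ι} (hi₀ : f i₀ = 0) :
    ∃ B, countLE g B = countLE f B ∧ ∀ B' < B, countLE g B' ≤ countLE f B' := by
  have enough_at_top : countLE f ⊤ ≤ countLE g ⊤ := by
    rwa [countLE_eq_card_iff.2 fun _ => le_top, countLE_eq_card_iff.2 fun _ => le_top]
  obtain ⟨B, hB, hmin⟩ := exists_minimal_of_wellFoundedLT (fun B => countLE f B ≤ countLE g B)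
    ⟨⊤, enough_at_top⟩
  have hlt (B' : Fin a) (hB' : B' < B) : countLE g B' < countLE f B' :=
    not_le.1 fun hle => hB'.not_ge (hmin hle hB'.le)
  refine ⟨B, le_antisymm ?_ hB, fun B' hB' => (hlt B' hB').le⟩
  rcases Nat.eq_zero_or_pos (B : ℕ) with hzero | hpos
  · calc countLE g B ≤ 1 := card_le_one.2 fun j hj j' hj' => hg <| by
          simp only [mem_filter, mem_univ, true_and] at hj hj'
          lia
      _ ≤ countLE f B := countLE_pos_iff.2 ⟨i₀, by lia⟩
  · let B' : Fin a := ⟨B - 1, by lia⟩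
    have hB' : B' < B := Fin.lt_def.2 (Nat.sub_one_lt_of_lt hpos)
    calc countLE g B ≤ countLE g B' + 1 :=
          countLE_le_countLE_add_one hg (Nat.le_add_of_sub_le le_rfl)
      _ ≤ countLE f B' := hlt B' hB'
      _ ≤ countLE f B := countLE_mono f hB'.le

end CountLE

section SquareSubmatrices

variable {K : Type} [Field K] {r a : ℕ}

theorem AllSquareSubmatricesNonsingular.apply_ne_zero {M : Matrix (Fin r) (Fin a) K}
    (hM : AllSquareSubmatricesNonsingular M) (i : Fin r) (j : Fin a) : M i j ≠ 0 := by
  simpa using hM 1 (fun _ => i) (fun _ => j) (Function.injective_of_subsingleton _)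
    (Function.injective_of_subsingleton _)

theorem AllSquareSubmatricesNonsingular.linearIndependent_row_submatrix
    {M : Matrix (Fin r) (Fin a) K} (hM : AllSquareSubmatricesNonsingular M)
    {ι κ : Type*} [Fintype ι] [Fintype κ] (hcard : Fintype.card ι = Fintype.card κ)
    {ρ : ι → Fin r} {σ : κ → Fin a} (hρ : ρ.Injective) (hσ : σ.Injective) :
    LinearIndependent K (M.submatrix ρ σ).row := by
  let e := (Fintype.equivFin ι).symm
  let e' := (Fintype.equivFinOfCardEq hcard.symm).symm
  rw [linearIndependent_row_iff_det_submatrix_ne_zero _ e e', Matrix.submatrix_submatrix]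
  exact hM _ _ _ (hρ.comp e.injective) (hσ.comp e'.injective)

theorem AllSquareSubmatricesNonsingular.gammaMatrix {C : Matrix (Fin r) (Fin a) K}
    (hC : AllSquareSubmatricesNonsingular C) {α : Fin a → K} (hα : ∀ j, α j ≠ 0) :
    AllSquareSubmatricesNonsingular (gammaMatrix C α) := by
  intro z ρ σ hρ hσ
  have submatrix_eq : (_root_.gammaMatrix C α).submatrix ρ σ =
      Matrix.of fun i j => α (σ j) * C.submatrix ρ σ i j := by
    ext i j
    exact mul_comm _ _
  rw [submatrix_eq, Matrix.det_mul_row]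
  exact mul_ne_zero (Finset.prod_ne_zero_iff.2 fun j _ => hα _) (hC z ρ σ hρ hσ)

end SquareSubmatrices

section TowerScaling

variable {K : Type} [Field K] {r a : ℕ}

/-- The field generated by the entries of `C` and the scalars `α i`, `i < d`. -/
def scalingField (C : Matrix (Fin r) (Fin a) K) (α : Fin a → K) (d : Fin a) : Subfield K :=
  Subfield.closure (Set.range (Function.uncurry C) ∪ α '' Set.Iio d)

/-- Column scalars each of which, from index `2` on, generates a proper extension of the field
generated by `C` and the preceding scalars. This is all that the decoding argument needs from the
tower `F_{Q_0} ⊆ ⋯ ⊆ F_{Q_{a-1}}`. -/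
structure IsTowerScaling (C : Matrix (Fin r) (Fin a) K) (α : Fin a → K) : Prop where
  ne_zero : ∀ j, α j ≠ 0
  notMem_scalingField : ∀ d : Fin a, 2 ≤ (d : ℕ) → α d ∉ scalingField C α d

theorem apply_mem_scalingField (C : Matrix (Fin r) (Fin a) K) (α : Fin a → K) (d : Fin a)
    (k : Fin r) (j : Fin a) : C k j ∈ scalingField C α d :=
  Subfield.subset_closure (.inl ⟨(k, j), rfl⟩)

theorem gammaMatrix_mem_scalingField (C : Matrix (Fin r) (Fin a) K) (α : Fin a → K) {d j : Fin a}
    (hj : j < d) (k : Fin r) : gammaMatrix C α k j ∈ scalingField C α d :=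
  mul_mem (apply_mem_scalingField C α d k j) (Subfield.subset_closure (.inr ⟨j, hj, rfl⟩))

theorem IsTowerScaling.of_subfields {C : Matrix (Fin r) (Fin a) K} {α : Fin a → K}
    {F : ℕ → Subfield K} (hF : Monotone F) (hC : ∀ i j, C i j ∈ F 0)
    (hone : ∀ j : Fin a, (j : ℕ) ≤ 1 → α j = 1)
    (hmem : ∀ j : Fin a, 2 ≤ (j : ℕ) → α j ∈ F j ∧ α j ∉ F (j - 1)) :
    IsTowerScaling C α := by
  have mem (j : Fin a) : α j ∈ F j := by
    rcases le_or_gt (j : ℕ) 1 with hj | hj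
    · exact hone j hj ▸ one_mem _
    · exact (hmem j hj).1
  have ne_zero (j : Fin a) : α j ≠ 0 := by
    rcases le_or_gt (j : ℕ) 1 with hj | hj
    · exact hone j hj ▸ one_ne_zero
    · exact fun h => (hmem j hj).2 (h ▸ zero_mem _)
  have scalingField_le (d : Fin a) : scalingField C α d ≤ F (d - 1) := by
    rw [scalingField, Subfield.closure_le, Set.union_subset_iff]
    constructor
    · rintro _ ⟨p, rfl⟩
      exact hF (Nat.zero_le _) (hC p.1 p.2)
    · rintro _ ⟨j, hj, rfl⟩
      exact hF (Nat.le_sub_one_of_lt hj) (mem j)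
  exact ⟨ne_zero, fun d hd h => (hmem d hd).2 (scalingField_le d h)⟩

end TowerScaling

section Staircase

open Finset Function

variable {K : Type} [Field K] {r a : ℕ} {ι κ : Type*}

/-- A staircase matrix: row `i` is the message symbol `(row i).2` of block `(row i).1`, column `j`
is the parity check of block `col j`, truncated to the blocks up to `cut j`. Untruncated checks have
`cut = col`; the difference `col j - (row i).1` in `Fin a` does not wrap around when
`(row i).1 ≤ cut j ≤ col j`. -/
def staircase (Γ : Matrix (Fin r) (Fin a) K) (row : ι → Fin a × Fin r) (col cut : κ → Fin a) :
    Matrix ι κ K :=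
  Matrix.of fun i j => if (row i).1 ≤ cut j then Γ (row i).2 (col j - (row i).1) else 0

variable {row : ι → Fin a × Fin r} {col cut : κ → Fin a}

theorem staircase_update [DecidableEq κ] (Γ : Matrix (Fin r) (Fin a) K) (j₀ : κ) (b : Fin a) :
    staircase Γ row col (update cut j₀ b) = (staircase Γ row col cut).updateCol j₀
      fun i => if (row i).1 ≤ b then Γ (row i).2 (col j₀ - (row i).1) else 0 := by
  ext i j
  obtain rfl | hj := eq_or_ne j j₀ <;> simp [staircase, *]

theorem linearIndependent_row_staircase_of_constant_block [Fintype ι] [Fintype κ]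
    {Γ : Matrix (Fin r) (Fin a) K} (hΓ : AllSquareSubmatricesNonsingular Γ)
    (hrow : row.Injective) (hcol : col.Injective) (hcard : Fintype.card ι = Fintype.card κ)
    {b : Fin a} (hb : ∀ i, (row i).1 = b) (hcut : ∀ j, b ≤ cut j) :
    LinearIndependent K (staircase Γ row col cut).row := by
  have eq_submatrix : staircase Γ row col cut =
      Γ.submatrix (fun i => (row i).2) (fun j => col j - b) := by
    ext i j
    simp [staircase, hb, hcut]
  rw [eq_submatrix]
  refine hΓ.linearIndependent_row_submatrix hcard (fun i i' h => hrow ?_) fun j j' h => hcol ?_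
  · exact Prod.ext ((hb i).trans (hb i').symm) h
  · have := b.pos
    have : NeZero a := ⟨by lia⟩
    exact sub_left_injective h

theorem fin_sub_lt_sub {b b' c c' : Fin a} (hb : b ≤ b') (hbc : b' ≤ c) (hc : c ≤ c')
    (hlt : c < c' ∨ b < b') : c - b' < c' - b := by
  rw [Fin.lt_def, Fin.sub_val_of_le hbc, Fin.sub_val_of_le (hb.trans (hbc.trans hc))]
  lia

theorem staircase_mem_scalingField (C : Matrix (Fin r) (Fin a) K) (α : Fin a → K) {d : Fin a}
    {i : ι} {j : κ} (h : (row i).1 ≤ cut j → col j - (row i).1 < d) :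
    staircase (gammaMatrix C α) row col cut i j ∈ scalingField C α d := by
  rw [staircase, Matrix.of_apply]
  split_ifs with hcut
  · exact gammaMatrix_mem_scalingField C α (h hcut) _
  · exact zero_mem _

theorem inv_mul_staircase_mem_scalingField (C : Matrix (Fin r) (Fin a) K) {α : Fin a → K}
    (hα : ∀ j, α j ≠ 0) (d : Fin a) {b : Fin a} {i : ι} {j : κ} (hb : b ≤ (row i).1)
    (hcut : cut j ≤ b) :
    (α (col j - b))⁻¹ * staircase (gammaMatrix C α) row col cut i j ∈ scalingField C α d := by
  rw [staircase, Matrix.of_apply]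
  split_ifs with h
  · rw [le_antisymm (h.trans hcut) hb, gammaMatrix, Matrix.of_apply, mul_comm,
      mul_inv_cancel_right₀ (hα _)]
    exact apply_mem_scalingField C α d _ _
  · simp

theorem exists_mul_staircase_mem_scalingField (C : Matrix (Fin r) (Fin a) K) {α : Fin a → K}
    (hα : ∀ j, α j ≠ 0) {b : Fin a} (hb : ∀ i, b ≤ (row i).1) {j j₀ : κ} (hcutcol : cut j ≤ col j)
    (hlt : b < cut j → col j < col j₀) :
    ∃ s ≠ 0, ∀ i, s * staircase (gammaMatrix C α) row col cut i j ∈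
      scalingField C α (col j₀ - b) := by
  rcases le_or_gt (cut j) b with hcut | hcut
  · exact ⟨_, inv_ne_zero (hα _), fun i =>
      inv_mul_staircase_mem_scalingField C hα _ (hb i) hcut⟩
  · refine ⟨1, one_ne_zero, fun i => ?_⟩
    rw [one_mul]
    exact staircase_mem_scalingField C α fun hi =>
      fin_sub_lt_sub (hb i) (hi.trans hcutcol) (hlt hcut).le (.inl (hlt hcut))

-- The column `j₀` is `α (col j₀ - b) • v + w`, where `v` is its part in the first block `b`; the
-- scalar `α (col j₀ - b)` occurs nowhere else, except as a common factor of columns cut at `b`.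
theorem linearIndependent_row_staircase_of_update [Fintype ι] [Fintype κ] [DecidableEq κ]
    {C : Matrix (Fin r) (Fin a) K} {α : Fin a → K} (hα : IsTowerScaling C α)
    (hcol : col.Injective) (hcutcol : ∀ j, cut j ≤ col j)
    (hcard : Fintype.card ι = Fintype.card κ)
    {b : Fin a} (hb : ∀ i, b ≤ (row i).1) {j₀ : κ} (hj₀ : b < cut j₀)
    (hmax : ∀ j, b < cut j → col j ≤ col j₀) (htwo : 2 ≤ ((col j₀ - b : Fin a) : ℕ))
    (hind : LinearIndependent K (staircase (gammaMatrix C α) row col (update cut j₀ b)).row) :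
    LinearIndependent K (staircase (gammaMatrix C α) row col cut).row := by
  set M := staircase (gammaMatrix C α) row col cut
  set d := col j₀ - b
  let v (i : ι) : K := if (row i).1 = b then C (row i).2 d else 0
  let w (i : ι) : K := if (row i).1 = b then 0 else M i j₀
  have update_eq : staircase (gammaMatrix C α) row col (update cut j₀ b) =
      M.updateCol j₀ (α d • v) := by
    rw [staircase_update]
    congr 1
    ext i
    by_cases hi : (row i).1 = b
    · simp [v, hi, gammaMatrix, d, mul_comm]
    · simp [v, hi, (hb i).lt_of_ne' hi]
  have eq_updateCol : M = M.updateCol j₀ (α d • v + w) := by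
    ext i j
    obtain rfl | hj := eq_or_ne j j₀
    · by_cases hi : (row i).1 = b
      · simp [M, staircase, v, w, hi, hj₀.le, gammaMatrix, d, mul_comm]
      · simp [v, w, hi]
    · simp [hj]
  rw [eq_updateCol]
  refine linearIndependent_row_updateCol_smul_add (scalingField C α d) hcard ?_ ?_ ?_
    (hα.notMem_scalingField d htwo) (update_eq ▸ hind)
  · intro j hj
    exact exists_mul_staircase_mem_scalingField C hα.ne_zero hb (hcutcol j)
      fun hcut => (hmax j hcut).lt_of_ne (hcol.ne hj)
  · intro i
    simp only [v]
    split_ifs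
    exacts [apply_mem_scalingField C α d _ _, zero_mem _]
  · intro i
    simp only [w]
    split_ifs with hi
    · exact zero_mem _
    · exact staircase_mem_scalingField C α fun hle =>
        fin_sub_lt_sub (hb i) (hle.trans (hcutcol j₀)) le_rfl (.inr ((hb i).lt_of_ne' hi))

/-- Staircase data with as many rows as columns and Hall's condition: the columns cut at or before
block `B` never outnumber the rows in the blocks up to `B`. -/
structure IsHallStaircase [Fintype ι] [Fintype κ] (row : ι → Fin a × Fin r)
    (col cut : κ → Fin a) : Prop where
  row_injective : row.Injective
  col_injective : col.Injective
  cut_le_col : ∀ j, cut j ≤ col j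
  card_eq : Fintype.card ι = Fintype.card κ
  countLE_le : ∀ B, countLE cut B ≤ countLE (fun i => (row i).1) B

namespace IsHallStaircase

variable [Fintype ι] [Fintype κ]

theorem restrict_le (h : IsHallStaircase row col cut) {B : Fin a}
    (hB : countLE cut B = countLE (fun i => (row i).1) B) :
    IsHallStaircase (fun i : {i // (row i).1 ≤ B} => row i) (fun j : {j // cut j ≤ B} => col j)
      (fun j => cut j) where
  row_injective := h.row_injective.comp Subtype.val_injective
  col_injective := h.col_injective.comp Subtype.val_injective
  cut_le_col j := h.cut_le_col j
  card_eq := by rw [Fintype.card_subtype, Fintype.card_subtype]; exact hB.symm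
  countLE_le B' := by
    rw [countLE_restrict_le cut, countLE_restrict_le fun i => (row i).1]
    exact h.countLE_le _

theorem restrict_not_le (h : IsHallStaircase row col cut) {B : Fin a}
    (hB : countLE cut B = countLE (fun i => (row i).1) B) :
    IsHallStaircase (fun i : {i // ¬ (row i).1 ≤ B} => row i)
      (fun j : {j // ¬ cut j ≤ B} => col j) (fun j => cut j) where
  row_injective := h.row_injective.comp Subtype.val_injective
  col_injective := h.col_injective.comp Subtype.val_injective
  cut_le_col j := h.cut_le_col j
  card_eq := by
    rw [Fintype.card_subtype_compl, Fintype.card_subtype_compl, (h.restrict_le hB).card_eq,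
      h.card_eq]
  countLE_le B' := by
    have cut_split := countLE_restrict_not_le_add cut B B'
    have row_split := countLE_restrict_not_le_add (fun i => (row i).1) B B'
    have hall := h.countLE_le B'
    rcases le_total B B' with hle | hle
    · rw [min_eq_left hle] at cut_split row_split
      lia
    · rw [min_eq_right hle] at cut_split
      lia

theorem update_cut [DecidableEq κ] (h : IsHallStaircase row col cut) {j₀ : κ} {b : Fin a}
    (hb : b ≤ cut j₀)
    (hlt : ∀ B, b ≤ B → B < cut j₀ → countLE cut B < countLE (fun i => (row i).1) B) :
    IsHallStaircase row col (update cut j₀ b) where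
  row_injective := h.row_injective
  col_injective := h.col_injective
  cut_le_col := by
    rw [← Pi.le_def, update_le_iff]
    exact ⟨hb.trans (h.cut_le_col j₀), fun j _ => h.cut_le_col j⟩
  card_eq := h.card_eq
  countLE_le B := by
    by_cases hB : b ≤ B ∧ B < cut j₀
    · exact (countLE_update_le cut j₀ b B).trans (hlt B hB.1 hB.2)
    · rw [countLE_update_of_iff (by grind)]
      exact h.countLE_le B

theorem le_cut (h : IsHallStaircase row col cut) {b : Fin a} (hb : ∀ i, b ≤ (row i).1) (j : κ) :
    b ≤ cut j := by
  have count_pos : 0 < countLE cut (cut j) := countLE_pos_iff.2 ⟨j, le_rfl⟩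
  obtain ⟨i, hi⟩ := countLE_pos_iff.1 (count_pos.trans_le (h.countLE_le _))
  exact (hb i).trans hi

theorem exists_col_max_of_lt (h : IsHallStaircase row col cut) {b : Fin a} {i : ι}
    (hi : b < (row i).1) : ∃ j₀, b < cut j₀ ∧ ∀ j, b < cut j → col j ≤ col j₀ := by
  have exists_lt_cut : ∃ j, b < cut j := by
    by_contra! hcut
    have row_count := h.countLE_le b
    rw [countLE_eq_card_iff.2 hcut, ← h.card_eq] at row_count
    exact hi.not_ge (countLE_eq_card_iff.1 ((countLE_le_card _ _).antisymm row_count) i)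
  obtain ⟨j, hj⟩ := exists_lt_cut
  obtain ⟨j₀, hj₀, hmax⟩ := exists_max_image {j | b < cut j} col ⟨j, by simpa using hj⟩
  exact ⟨j₀, by simpa using hj₀, by simpa using hmax⟩

theorem two_le_col_sub (h : IsHallStaircase row col cut) {b : Fin a} {i : ι}
    (hi : b < (row i).1) {j₀ : κ} (hj₀ : b < cut j₀)
    (hmax : ∀ j, b < cut j → col j ≤ col j₀)
    (hlt : countLE cut b < countLE (fun i => (row i).1) b) :
    2 ≤ ((col j₀ - b : Fin a) : ℕ) := by
  classical
  have b_lt_col := hj₀.trans_le (h.cut_le_col j₀)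
  rw [Fin.sub_val_of_le b_lt_col.le]
  by_contra! hsub
  have update_le (j : κ) : update cut j₀ b j ≤ b := by
    obtain rfl | hj := eq_or_ne j j₀
    · simp
    · rw [update_of_ne hj]
      by_contra! hcut
      have := h.cut_le_col j
      have := (hmax j hcut).lt_of_ne (h.col_injective.ne hj)
      lia
  have card_le : Fintype.card ι ≤ countLE (fun i => (row i).1) b :=
    calc Fintype.card ι = countLE (update cut j₀ b) b :=
          h.card_eq.trans (countLE_eq_card_iff.2 update_le).symm
      _ ≤ countLE cut b + 1 := countLE_update_le ..
      _ ≤ countLE (fun i => (row i).1) b := hlt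
  exact hi.not_ge (countLE_eq_card_iff.1 ((countLE_le_card _ _).antisymm card_le) i)

end IsHallStaircase

theorem card_subtype_add_sum_subtype_lt [Fintype ι] [Fintype κ] (f : κ → ℕ) {p : ι → Prop}
    {q : κ → Prop} [DecidablePred p] [DecidablePred q] {i : ι} (hi : ¬ p i) :
    Fintype.card {i // p i} + ∑ j : {j // q j}, f j < Fintype.card ι + ∑ j, f j := by
  have card_lt := Fintype.card_subtype_lt hi
  have sum_split := Fintype.sum_subtype_add_sum_subtype q f
  lia

theorem linearIndependent_row_staircase_of_tight [Finite ι]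
    (Γ : Matrix (Fin r) (Fin a) K) (B : Fin a)
    (hle : LinearIndependent K (staircase Γ (fun i : {i // (row i).1 ≤ B} => row i)
      (fun j : {j // cut j ≤ B} => col j) (fun j => cut j)).row)
    (hnot : LinearIndependent K (staircase Γ (fun i : {i // ¬ (row i).1 ≤ B} => row i)
      (fun j : {j // ¬ cut j ≤ B} => col j) (fun j => cut j)).row) :
    LinearIndependent K (staircase Γ row col cut).row :=
  linearIndependent_row_of_toBlock (p := fun i => (row i).1 ≤ B) (q := fun j => cut j ≤ B)
    (fun _ _ hi hj => if_neg fun h => hi (h.trans hj)) hle hnot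

-- Lowering the cut of the last uncut column strips off the top scalar of the tower. It preserves
-- Hall's condition unless that condition is tight at some block, where the matrix is block
-- triangular.
theorem linearIndependent_row_staircase [Fintype ι] [Fintype κ]
    {C : Matrix (Fin r) (Fin a) K} {α : Fin a → K} (hC : AllSquareSubmatricesNonsingular C)
    (hα : IsTowerScaling C α) (h : IsHallStaircase row col cut) :
    LinearIndependent K (staircase (gammaMatrix C α) row col cut).row := by
  classical
  induction hn : Fintype.card ι + ∑ j, (cut j : ℕ) using Nat.strong_induction_on
    generalizing ι κ with | _ n ih
  subst hn
  rcases isEmpty_or_nonempty ι with _ | _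
  · exact linearIndependent_empty_type
  obtain ⟨i₀, hmin⟩ := Finite.exists_min fun i => (row i).1
  set b := (row i₀).1
  by_cases hconst : ∀ i, (row i).1 = b
  · exact linearIndependent_row_staircase_of_constant_block (hC.gammaMatrix hα.ne_zero)
      h.row_injective h.col_injective h.card_eq hconst (h.le_cut hmin)
  push Not at hconst
  obtain ⟨i₁, hi₁⟩ := hconst
  have b_lt : b < (row i₁).1 := (hmin i₁).lt_of_ne' hi₁
  obtain ⟨j₀, hj₀, hmax⟩ := h.exists_col_max_of_lt b_lt
  by_cases htight : ∃ B, b ≤ B ∧ B < cut j₀ ∧ countLE cut B = countLE (fun i => (row i).1) B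
  · obtain ⟨B, hbB, hB, heq⟩ := htight
    have exists_row_gt : ∃ i, ¬ (row i).1 ≤ B := by
      by_contra! hle
      rw [countLE_eq_card_iff.2 hle, h.card_eq, countLE_eq_card_iff] at heq
      exact hB.not_ge (heq j₀)
    obtain ⟨i, hi⟩ := exists_row_gt
    exact linearIndependent_row_staircase_of_tight _ B
      (ih _ (card_subtype_add_sum_subtype_lt _ hi) (h.restrict_le heq) rfl)
      (ih _ (card_subtype_add_sum_subtype_lt _ (not_not.2 hbB)) (h.restrict_not_le heq) rfl)
  · have hlt (B : Fin a) (hbB : b ≤ B) (hB : B < cut j₀) :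
        countLE cut B < countLE (fun i => (row i).1) B :=
      (h.countLE_le B).lt_of_ne fun heq => htight ⟨B, hbB, hB, heq⟩
    refine linearIndependent_row_staircase_of_update hα h.col_injective h.cut_le_col h.card_eq hmin
      hj₀ hmax (h.two_le_col_sub b_lt hj₀ hmax (hlt b le_rfl hj₀)) ?_
    refine ih _ ?_ (h.update_cut hj₀.le hlt) rfl
    gcongr ?_ + ?_
    have update_le : update cut j₀ b ≤ cut := update_le_self_iff.2 hj₀.le
    exact sum_lt_sum (fun j _ => update_le j) ⟨j₀, mem_univ _, by simpa using hj₀⟩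

theorem IsHallStaircase.exists_restrict [NeZero a] [Fintype ι] [Fintype κ]
    (hrow : row.Injective) (hcol : col.Injective) (hcard : Fintype.card ι ≤ Fintype.card κ)
    {i₀ : ι} (hi₀ : (row i₀).1 = 0) :
    ∃ B, IsHallStaircase (fun i : {i // (row i).1 ≤ B} => row i)
      (fun j : {j // col j ≤ B} => col j) (fun j => col j) := by
  obtain ⟨B, heq, hlt⟩ := exists_countLE_eq (f := fun i => (row i).1) hcol hcard hi₀
  refine ⟨B, hrow.comp Subtype.val_injective, hcol.comp Subtype.val_injective, fun _ => le_rfl,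
    ?_, fun B' => ?_⟩
  · rw [Fintype.card_subtype, Fintype.card_subtype]
    exact heq.symm
  · rw [countLE_restrict_le col, countLE_restrict_le fun i => (row i).1]
    rcases (min_le_left B B').eq_or_lt with hmin | hmin
    · rw [hmin, heq]
    · exact hlt _ hmin

theorem eq_zero_of_vecMul_staircase_eq_zero [NeZero a] {C : Matrix (Fin r) (Fin a) K}
    {α : Fin a → K} (hC : AllSquareSubmatricesNonsingular C) (hα : IsTowerScaling C α)
    {D : Finset (Fin a × Fin r)} {T : Finset (Fin a)} (hcard : #D ≤ #T)
    {x : Fin a × Fin r → K} (hx : ∀ p ∉ D, x p = 0)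
    (hcheck : ∀ c ∈ T, Matrix.vecMul x (staircase (gammaMatrix C α) id id id) c = 0)
    (k : Fin r) : x (0, k) = 0 := by
  by_contra hne
  have mem_D : (0, k) ∈ D := not_imp_comm.1 (hx _) hne
  obtain ⟨B, hB⟩ := IsHallStaircase.exists_restrict (row := ((↑) : D → Fin a × Fin r))
    (col := ((↑) : T → Fin a)) Subtype.val_injective Subtype.val_injective (by simpa using hcard)
    (i₀ := ⟨_, mem_D⟩) rfl
  have independent : LinearIndependent K (staircase (gammaMatrix C α)
      (fun i : {i : D // i.1.1 ≤ B} => i.1.1) (fun j : {j : T // j.1 ≤ B} => j.1.1)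
      fun j => j.1.1).row := linearIndependent_row_staircase hC hα hB
  rw [Fintype.linearIndependent_iff] at independent
  refine hne (independent (fun i => x i) (funext fun c => ?_) ⟨⟨(0, k), mem_D⟩, Fin.zero_le B⟩)
  have zero_of_notMem_range (p : Fin a × Fin r)
      (hp : p ∉ Set.range fun i : {i : D // i.1.1 ≤ B} => i.1.1) :
      x p * staircase (gammaMatrix C α) id id id p c = 0 := by
    by_cases hpD : p ∈ D
    · have B_lt : B < p.1 := not_le.1 fun hle => hp ⟨⟨⟨p, hpD⟩, hle⟩, rfl⟩
      simp [staircase, (c.2.trans_lt B_lt).not_ge]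
    · simp [hx p hpD]
  rw [Finset.sum_apply]
  refine (Fintype.sum_of_injective _ (Subtype.val_injective.comp Subtype.val_injective) _ _
    zero_of_notMem_range fun i => ?_).trans (hcheck c c.1.2)
  simp [staircase]

end Staircase

section StreamingCode

theorem isSC_of_parity_sub {F : Type} [AddGroup F] {k n a τ : ℕ} (C : PacketCode F k n)
    (hsub : ∀ m m' t, C.parity (m - m') t = C.parity m t - C.parity m' t)
    (hdecode : ∀ (δ : ℤ → Fin k → F) (t : ℤ) (E : Finset ℤ), (∀ u ∈ E, t ≤ u) → t ∈ E →
      E.card ≤ a → (∀ u ≤ t + τ, u ∉ E → δ u = 0) →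
      (∀ u, t ≤ u → u ≤ t + τ → u ∉ E → C.parity δ u = 0) → δ t = 0) :
    IsSC C a τ := by
  intro m m' _ _ t _ E hE htE hcard hpast hwindow
  refine sub_eq_zero.1 (hdecode (m - m') t E (fun u hu => (hE u hu).1) htE hcard ?_ ?_)
  · intro u hu huE
    rcases lt_or_ge u t with hut | hut
    · exact sub_eq_zero.2 (hpast u hut)
    · exact sub_eq_zero.2 (hwindow u hut hu huE).1
  · intro u hut hu huE
    rw [hsub, sub_eq_zero]
    exact (hwindow u hut hu huE).2

variable {K : Type} [Field K] {r a : ℕ}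

theorem construction1_parity_sub (Γ : Matrix (Fin r) (Fin a) K) (m m' : ℤ → Fin r → K) (t : ℤ) :
    (construction1 Γ).parity (m - m') t =
      (construction1 Γ).parity m t - (construction1 Γ).parity m' t := by
  funext
  simp [construction1, mul_sub]

/-- The time of the `p.2`-th symbol of block `p.1` on the diagonal starting at time `s`: a diagonal
consists of blocks of `r + 1` consecutive times, `r` message symbols followed by a parity. -/
def slot (s : ℤ) (p : Fin a × Fin (r + 1)) : ℤ :=
  s + (finProdFinEquiv p : ℕ)

theorem slot_injective (s : ℤ) : (slot s : Fin a × Fin (r + 1) → ℤ).Injective :=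
  (add_right_injective s).comp
    (Nat.cast_injective.comp (Fin.val_injective.comp finProdFinEquiv.injective))

theorem slot_eq (s : ℤ) (b : Fin a) (k : Fin (r + 1)) :
    slot s (b, k) = s + k + b * (r + 1) := by
  rw [slot, finProdFinEquiv_apply_val]
  push_cast
  ring

theorem slot_le (s : ℤ) (p : Fin a × Fin (r + 1)) : slot s p ≤ s + (a * (r + 1) - 1 : ℕ) := by
  have := (finProdFinEquiv p).isLt
  unfold slot
  lia

theorem le_slot (s : ℤ) (b : Fin a) (k : Fin (r + 1)) : s + k ≤ slot s (b, k) := by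
  rw [slot_eq]
  have : (0 : ℤ) ≤ b * (r + 1) := by positivity
  lia

/-- The message symbols of `δ` on the diagonal starting at time `s`, indexed by block and
position. -/
def diagonalSymbols (δ : ℤ → Fin r → K) (s : ℤ) (p : Fin a × Fin r) : K :=
  δ (slot s (p.1, p.2.castSucc)) p.2

theorem construction1_parity_slot [NeZero a] (Γ : Matrix (Fin r) (Fin a) K) {δ : ℤ → Fin r → K}
    {s : ℤ} (hδ : ∀ u < s, δ u = 0) (c : Fin a) :
    (construction1 Γ).parity δ (slot s (c, Fin.last r)) =
      fun _ => Matrix.vecMul (diagonalSymbols δ s) (staircase Γ id id id) c := by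
  funext
  simp only [construction1, Matrix.vecMul, dotProduct, Fintype.sum_prod_type]
  rw [← (Equiv.subLeft c).sum_comp]
  refine Finset.sum_congr rfl fun b _ => Finset.sum_congr rfl fun k _ => ?_
  simp only [Equiv.subLeft_apply, diagonalSymbols, staircase, Matrix.of_apply, slot_eq, id,
    Fin.val_last, Fin.val_castSucc]
  split_ifs with hbc
  · rw [mul_comm, Fin.sub_val_of_le hbc, Nat.cast_sub hbc]
    congr 2
    ring
  · have sub_val : ((c - b : Fin a) : ℕ) = a + c - b := Fin.coe_sub_iff_lt.2 (not_le.1 hbc)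
    have time_lt : s + r + c * (r + 1) - r - ((c - b : Fin a) : ℕ) * ((r : ℤ) + 1) + k < s := by
      have lag_ge : (c : ℤ) + 1 ≤ ((c - b : Fin a) : ℕ) := by lia
      have := k.isLt
      nlinarith
    rw [hδ _ time_lt, mul_zero]
    exact mul_zero _

theorem vecMul_diagonalSymbols_eq_zero [NeZero a] {Γ : Matrix (Fin r) (Fin a) K}
    {δ : ℤ → Fin r → K} {s : ℤ} (hδ : ∀ u < s, δ u = 0) {c : Fin a}
    (hparity : (construction1 Γ).parity δ (slot s (c, Fin.last r)) = 0) :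
    Matrix.vecMul (diagonalSymbols δ s) (staircase Γ id id id) c = 0 :=
  congrFun ((construction1_parity_slot Γ hδ c).symm.trans hparity) ⟨0, by lia⟩

theorem card_erased_symbols_add_card_erased_parities_le (s : ℤ) (E : Finset ℤ) :
    Finset.card {p : Fin a × Fin r | slot s (p.1, p.2.castSucc) ∈ E} +
      Finset.card {c : Fin a | slot s (c, Fin.last r) ∈ E} ≤ E.card := by
  rw [← Finset.card_disjSum]
  refine Finset.card_le_card_of_injOn
    (Sum.elim (fun p => slot s (p.1, p.2.castSucc)) fun c => slot s (c, Fin.last r)) ?_ ?_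
  · rintro (p | c) h <;> simpa using h
  · refine Function.Injective.injOn (.sumElim ?_ ?_ ?_)
    · intro p p' h
      simpa [Prod.ext_iff] using slot_injective s h
    · intro c c' h
      simpa using slot_injective s h
    · intro p c h
      simpa [Fin.castSucc_ne_last] using slot_injective s h

theorem construction1_isSC_local [NeZero a] {Γ : Matrix (Fin r) (Fin a) K} (hΓ : ∀ i, Γ i 0 ≠ 0) :
    IsSC (construction1 Γ) 1 r := by
  refine isSC_of_parity_sub _ (construction1_parity_sub Γ) fun δ t E _ htE hcard hδ hparity => ?_
  obtain rfl : E = {t} := (Finset.eq_of_subset_of_card_le (by simpa using htE) (by simpa)).symm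
  funext i
  have hi := i.isLt
  set s := t - (i : ℤ)
  have slot_zero (k : Fin (r + 1)) : slot s ((0 : Fin a), k) = t - i + k := by simp [slot_eq, s]
  have check : Matrix.vecMul (diagonalSymbols δ s) (staircase Γ id id id) 0 = 0 := by
    refine vecMul_diagonalSymbols_eq_zero (fun u hu => hδ u ?_ ?_) ?_
    · lia
    · simp only [Finset.mem_singleton]
      lia
    · rw [slot_zero, Fin.val_last]
      exact hparity _ (by lia) (by lia) (by simp only [Finset.mem_singleton]; lia)
  rw [Matrix.vecMul, dotProduct, Fintype.sum_eq_single (0, i)] at check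
  · simpa [staircase, diagonalSymbols, slot_zero, hΓ] using check
  · rintro ⟨b, k⟩ hne
    obtain rfl | hb := eq_or_ne b 0
    · have hk : (k : ℕ) ≠ i := fun h => hne (congrArg _ (Fin.ext h))
      have symbol_zero : δ (slot s ((0 : Fin a), k.castSucc)) = 0 := by
        rw [slot_zero, Fin.val_castSucc]
        exact hδ _ (by lia) (by simp only [Finset.mem_singleton]; lia)
      simp [diagonalSymbols, symbol_zero]
    · simp [staircase, hb]

theorem construction1_isSC_global [NeZero a] {C : Matrix (Fin r) (Fin a) K} {α : Fin a → K}
    (hC : AllSquareSubmatricesNonsingular C) (hα : IsTowerScaling C α) :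
    IsSC (construction1 (gammaMatrix C α)) a (a * (r + 1) - 1) := by
  refine isSC_of_parity_sub _ (construction1_parity_sub _) fun δ t E hE _ hcard hδ hparity => ?_
  funext i
  have hi := i.isLt
  set s := t - (i : ℤ)
  have card_le : Finset.card {p : Fin a × Fin r | slot s (p.1, p.2.castSucc) ∈ E} ≤
      Finset.card {c : Fin a | slot s (c, Fin.last r) ∉ E} := by
    have erased := card_erased_symbols_add_card_erased_parities_le (a := a) (r := r) s E
    have checks := Finset.card_filter_add_card_filter_not (s := .univ)
      fun c : Fin a => slot s (c, Fin.last r) ∈ E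
    rw [Finset.card_fin] at checks
    lia
  have slot_le_window (p : Fin a × Fin (r + 1)) : slot s p ≤ t + (a * (r + 1) - 1 : ℕ) :=
    (slot_le s p).trans (by lia)
  have slot_zero : slot s ((0 : Fin a), i.castSucc) = t := by simp [slot_eq, s]
  have symbol_zero := eq_zero_of_vecMul_staircase_eq_zero hC hα card_le
    (x := diagonalSymbols δ s) ?_ ?_ i
  · rwa [diagonalSymbols, slot_zero] at symbol_zero
  · intro p hp
    exact congrFun (hδ _ (slot_le_window _) (by simpa using hp)) p.2
  · intro c hc
    refine vecMul_diagonalSymbols_eq_zero (fun u hu => hδ u ?_ fun huE => ?_)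
      (hparity _ ?_ (slot_le_window _) (by simpa using hc))
    · lia
    · have := hE u huE
      lia
    · have := le_slot s c (Fin.last r)
      rw [Fin.val_last] at this
      lia

end StreamingCode

theorem rate_eq_min_upper_bounds {a : ℕ} (ha : a ≠ 0) (r : ℕ) :
    (r : ℚ) / (r + 1) = min (((a : ℚ) * (r + 1) - a) / (a * (r + 1))) ((r : ℚ) / (r + 1)) := by
  have ha' : (a : ℚ) ≠ 0 := Nat.cast_ne_zero.2 ha
  rw [← mul_sub_one, add_sub_cancel_right, mul_div_mul_left _ _ ha', min_self]

theorem construction1_isLRSC_general {K : Type} [Field K] {a r : ℕ} [NeZero a]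
    {C : Matrix (Fin r) (Fin a) K} {α : Fin a → K} (hC : AllSquareSubmatricesNonsingular C)
    (hα : IsTowerScaling C α) :
    IsLRSC (construction1 (gammaMatrix C α)) a (a * (r + 1) - 1) r :=
  ⟨construction1_isSC_global hC hα,
    construction1_isSC_local ((hC.gammaMatrix hα.ne_zero).apply_ne_zero · 0)⟩

/-- The Construction-1 code `C_{(a,a(r+1)-1,r)}` is a rate-optimal
`(a, a(r+1)-1, r)` locally recoverable streaming code: it is simultaneously an
`(a, a(r+1)-1)` SC and a `(1,r)` SC, and its rate `r/(r+1)` matches the upper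
bound `min{(a(r+1)-a)/(a(r+1)), r/(r+1)}`. -/
theorem construction1_isLRSC
    (K : Type) [Field K] [Fintype K] (q a r : ℕ)
    (hq : IsPrimePow q) (ha : 2 ≤ a) (hr : 1 ≤ r)
    (Fsub : ℕ → Subfield K) (hmono : Monotone Fsub)
    (hcard : ∀ j ≤ a - 1, Nat.card (Fsub j) = q ^ 2 ^ (j - 1))
    (htop : Fsub (a - 1) = ⊤)
    (C : Matrix (Fin r) (Fin a) K) (hC : ∀ i j, C i j ∈ Fsub 0)
    (hCns : AllSquareSubmatricesNonsingular C)
    (α : Fin a → K)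
    (hα01 : ∀ j : Fin a, (j : ℕ) ≤ 1 → α j = 1)
    (hαmem : ∀ j : Fin a, 2 ≤ (j : ℕ) → α j ∈ Fsub (j : ℕ) ∧ α j ∉ Fsub ((j : ℕ) - 1))
    :
    IsLRSC (construction1 (gammaMatrix C α)) a (a * (r + 1) - 1) r ∧
    (r : ℚ) / ((r : ℚ) + 1) =
      min (((a : ℚ) * ((r : ℚ) + 1) - (a : ℚ)) / ((a : ℚ) * ((r : ℚ) + 1)))
        ((r : ℚ) / ((r : ℚ) + 1)) := by
  have : NeZero a := ⟨by lia⟩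
  exact ⟨construction1_isLRSC_general hCns (.of_subfields hmono hC hα01 hαmem),
    rate_eq_min_upper_bounds (NeZero.ne a) r⟩
end

section
/- Consider the parity check matrix H = [P^T | −I_a] ∈ F_Q^{a×a(r+1)} of C*_{a,r}, with columns h_0, h_1, …, h_{a(r+1)−1}. Let E ⊆ {0,…,a(r+1)−1} be any erasure set with |E| = a and E ∩ {0,…,r−1} nonempty. Then for every i ∈ E ∩ {0,…,r−1}, the column h_i does not lie in the linear span of {h_j : j ∈ E, i+1 ≤ j ≤ a(r+1)−1}. -/
/-- The parity-check matrix `H = [Pᵀ | -I_a]` of the scalar code `C*_{a,r}`: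
columns `0,…,ar-1` come in `a` blocks of width `r`, the `(i,j)`-th `1×r` block of
`Pᵀ` being `Γ_{i-j}ᵀ` for `j ≤ i` and `0` otherwise; the last `a` columns form
`-I_a`. -/
def starH {K : Type} [Field K] {r a : ℕ} (Γ : Matrix (Fin r) (Fin a) K) :
    Matrix (Fin a) (Fin (a * (r + 1))) K :=
  Matrix.of fun i c =>
    if hc : (c : ℕ) < a * r then
      if hji : (c : ℕ) / r ≤ (i : ℕ) then
        Γ ⟨(c : ℕ) % r, Nat.mod_lt _ (Nat.pos_of_ne_zero fun h => by
              subst h; simp at hc)⟩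
          ⟨(i : ℕ) - (c : ℕ) / r, lt_of_le_of_lt (Nat.sub_le _ _) i.isLt⟩
      else 0
    else if (c : ℕ) - a * r = (i : ℕ) then -1 else 0

/-- The scalar code `C*_{a,r} = {x : H x = 0}`, an `[a(r+1), ar]` linear code. -/
def starCode {K : Type} [Field K] {r a : ℕ} (Γ : Matrix (Fin r) (Fin a) K) :
    Set (Fin (a * (r + 1)) → K) :=
  {x | Matrix.mulVec (starH Γ) x = 0}


/-!
Let `x` be a codeword supported on at most `a` coordinates and, for each row `s` of `H`, write the
parity check as `α_s ⟨C_s, x₀⟩ + ⟨B_s, y⟩ = 0`, where `x₀` collects the support coordinates below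
`r` and `y` the others. The entries of `B_s` lie in `F_{s-1}`. At least as many rows as `x₀` has
coordinates have `B_s` in the span of the earlier `B_t`, and then the coefficients can be taken in
`F_{s-1}`. Substituting the earlier checks eliminates `y`, leaving `⟨α_s C_s + w_s, x₀⟩ = 0` with
`w_s` over `F_{s-1}`. The determinant of this square system is nonzero: starting from the
nonsingular minor of `C`, replace the rows `C_s` by `α_s C_s + w_s` in increasing order of `s`. Each
step changes the determinant from `D` to `α_s D + D₁` with `D ≠ 0` and `D, D₁ ∈ F_{s-1}`, which is
nonzero because `α_s ∉ F_{s-1}`. For `s ≤ 1` redundancy of `B_s` forces `B_s = 0`, so `w_s = 0`.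
-/

section RedundantIndices

variable {K V ι : Type*} [Field K] [AddCommGroup V] [Module K V] [LinearOrder ι]

variable (K) in
open Classical in
/-- The indices at which a finite ordered family of vectors fails to enlarge the span of the
preceding vectors; discarding them is the greedy extraction of a basis. -/
noncomputable def redundantIndices [Fintype ι] (b : ι → V) : Finset ι :=
  {s | b s ∈ Submodule.span K (b '' Set.Iio s)}

lemma mem_redundantIndices [Fintype ι] {b : ι → V} {s : ι} :
    s ∈ redundantIndices K b ↔ b s ∈ Submodule.span K (b '' Set.Iio s) := by
  simp [redundantIndices]

lemma linearIndepOn_of_notMem_span_image_Iio {b : ι → V} (S : Finset ι)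
    (hS : ∀ s ∈ S, b s ∉ Submodule.span K (b '' Set.Iio s)) : LinearIndepOn K b (S : Set ι) := by
  induction S using Finset.induction_on_max with
  | empty => simp
  | insert s S hlt ih =>
    rw [Finset.coe_insert]
    refine (ih fun t ht => hS t (Finset.mem_insert_of_mem ht)).insert fun hs => ?_
    exact hS s (Finset.mem_insert_self s S) (Submodule.span_mono (Set.image_mono hlt) hs)

lemma card_le_card_redundantIndices_add_finrank [Fintype ι] [Module.Finite K V] (b : ι → V) :
    Fintype.card ι ≤ (redundantIndices K b).card + Module.finrank K V := by
  have hindep : LinearIndepOn K b ((redundantIndices K b)ᶜ : Finset ι) :=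
    linearIndepOn_of_notMem_span_image_Iio _ fun s hs => by
      rwa [Finset.mem_compl, mem_redundantIndices] at hs
  have hcompl : (redundantIndices K b)ᶜ.card ≤ Module.finrank K V := by
    rw [← Fintype.card_coe]
    exact LinearIndependent.fintype_card_le_finrank hindep
  have := Finset.card_add_card_compl (redundantIndices K b)
  omega

end RedundantIndices

section Subfield

variable {K : Type*} [Field K] {κ β : Type*} {L : Subfield K}

lemma mem_span_subfield_of_mem_span {T : Set (β → K)} (hT : ∀ u ∈ T, ∀ j, u j ∈ L) {v : β → K}
    (hv : ∀ j, v j ∈ L) (h : v ∈ Submodule.span K T) : v ∈ Submodule.span L T := by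
  obtain ⟨π, hπ⟩ := LinearMap.exists_leftInverse_of_injective (Algebra.linearMap L K)
    (LinearMap.ker_eq_bot.2 (algebraMap L K).injective)
  have hπ_mul (k : K) {l : K} (hl : l ∈ L) : (π (k * l) : K) = π k * l := by
    have := π.map_smul (⟨l, hl⟩ : L) k
    rw [Subfield.smul_def, smul_eq_mul, mul_comm] at this
    simp [this, mul_comm]
  have hπ_fix {l : K} (hl : l ∈ L) : (π l : K) = l :=
    congrArg Subtype.val (LinearMap.congr_fun hπ (⟨l, hl⟩ : L))
  have hproj {u : β → K} (hu : u ∈ Submodule.span K T) :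
      (fun j => (π (u j) : K)) ∈ Submodule.span L T := by
    induction hu using Submodule.closure_induction with
    | zero => simp [← Pi.zero_def]
    | add u u' _ _ hu hu' => simpa [← Pi.add_def] using add_mem hu hu'
    | smul_mem k u hu =>
      have hproj_smul : (fun j => (π ((k • u) j) : K)) = π k • u :=
        funext fun j => hπ_mul k (hT u hu j)
      rw [hproj_smul]
      exact Submodule.smul_mem _ _ (Submodule.subset_span hu)
  simpa only [hπ_fix (hv _)] using hproj h

variable [Fintype κ] [DecidableEq κ]

lemma det_mem_subfield {M : Matrix κ κ K} (hM : ∀ i j, M i j ∈ L) : M.det ∈ L := by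
  rw [Matrix.det_apply]
  exact sum_mem fun σ _ => L.toSubring.zsmul_mem (prod_mem fun i _ => hM _ _) _

lemma det_updateRow_smul_add_ne_zero {M : Matrix κ κ K} (hM : ∀ i j, M i j ∈ L)
    (hdet : M.det ≠ 0) (k : κ) {α : K} {w : κ → K} (hw : ∀ j, w j ∈ L)
    (hα : α ∉ L ∨ α ≠ 0 ∧ w = 0) : (M.updateRow k (α • M k + w)).det ≠ 0 := by
  rw [Matrix.det_updateRow_add, Matrix.det_updateRow_smul, Matrix.updateRow_eq_self]
  rcases hα with hα | ⟨hα, rfl⟩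
  · intro h
    have hw_det : (M.updateRow k w).det ∈ L := det_mem_subfield fun i j => by
      rw [Matrix.updateRow_apply]
      split_ifs
      exacts [hw j, hM i j]
    refine hα ?_
    rw [← div_eq_iff hdet |>.2 (eq_neg_of_add_eq_zero_left h).symm]
    exact div_mem (neg_mem hw_det) (det_mem_subfield hM)
  · have hzero : (M.updateRow k 0).det = 0 := Matrix.det_eq_zero_of_row_eq_zero k (by simp)
    rw [hzero, add_zero]
    exact mul_ne_zero hα hdet

end Subfield

section Tower

variable {K : Type*} [Field K] {ι κ β : Type*} [LinearOrder ι] [Fintype κ] [Fintype β]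
  {L : ι → Subfield K} {α : ι → K}

lemma det_smul_add_ne_zero [DecidableEq κ] (hL : Monotone L) (hα : ∀ s t, s < t → α s ∈ L t)
    {σ : κ → ι} (hσ : Function.Injective σ) {c w : κ → κ → K}
    (hc : ∀ s k l, c k l ∈ L s) (hw : ∀ k l, w k l ∈ L (σ k))
    (hαw : ∀ k, α (σ k) ∉ L (σ k) ∨ α (σ k) ≠ 0 ∧ w k = 0) (hdet : (Matrix.of c).det ≠ 0) :
    (Matrix.of fun k => α (σ k) • c k + w k).det ≠ 0 := by
  set v : κ → κ → K := fun k => α (σ k) • c k + w k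
  suffices h : ∀ S : Finset κ, (Matrix.of (S.piecewise v c)).det ≠ 0 by
    simpa only [Finset.piecewise_univ] using h Finset.univ
  intro S
  induction S using Finset.induction_on_max_value σ with
  | empty => simpa only [Finset.piecewise_empty] using hdet
  | insert k S hk hmax ih =>
    have hmem : ∀ i j, Matrix.of (S.piecewise v c) i j ∈ L (σ k) := by
      intro i j
      by_cases hi : i ∈ S
      · have hlt : σ i < σ k := (hmax i hi).lt_of_ne (hσ.ne (ne_of_mem_of_not_mem hi hk))
        rw [Matrix.of_apply, Finset.piecewise_eq_of_mem _ _ _ hi]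
        exact add_mem (mul_mem (hα _ _ hlt) (hc _ i j)) (hL hlt.le (hw i j))
      · rw [Matrix.of_apply, Finset.piecewise_eq_of_notMem _ _ _ hi]
        exact hc _ i j
    have hstep := det_updateRow_smul_add_ne_zero hmem ih k (hw k) (hαw k)
    have hrow : Matrix.of (S.piecewise v c) k = c k :=
      Finset.piecewise_eq_of_notMem S v c hk
    rw [hrow] at hstep
    rw [Finset.piecewise_insert]
    exact hstep

lemma exists_dotProduct_eq_of_mem_span (hL : Monotone L) (hα : ∀ s t, s < t → α s ∈ L t)
    {C : ι → κ → K} (hC : ∀ s t k, C s k ∈ L t) {B : ι → β → K} (hB : ∀ s j, B s j ∈ L s)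
    {x : κ → K} {y : β → K} (hxy : ∀ s, α s * (C s ⬝ᵥ x) + B s ⬝ᵥ y = 0) {s : ι}
    (hs : B s ∈ Submodule.span K (B '' Set.Iio s)) :
    ∃ w : κ → K, (∀ k, w k ∈ L s) ∧ B s ⬝ᵥ y = w ⬝ᵥ x := by
  have hsL : B s ∈ Submodule.span (L s) (B '' Set.Iio s) := by
    refine mem_span_subfield_of_mem_span ?_ (hB s) hs
    rintro _ ⟨t, ht, rfl⟩ j
    exact hL (le_of_lt ht) (hB t j)
  generalize B s = u at hsL ⊢
  induction hsL using Submodule.span_induction with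
  | mem u hu =>
    obtain ⟨t, ht, rfl⟩ := hu
    refine ⟨-(α t • C t), fun k => neg_mem (mul_mem (hα t s ht) (hC t s k)), ?_⟩
    rw [neg_dotProduct, smul_dotProduct, smul_eq_mul]
    exact eq_neg_of_add_eq_zero_right (hxy t)
  | zero => exact ⟨0, fun _ => zero_mem _, by simp⟩
  | add u v _ _ hu hv =>
    obtain ⟨w, hw, huw⟩ := hu
    obtain ⟨w', hw', hvw⟩ := hv
    exact ⟨w + w', fun k => add_mem (hw k) (hw' k), by
      rw [add_dotProduct, add_dotProduct, huw, hvw]⟩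
  | smul l u _ hu =>
    obtain ⟨w, hw, huw⟩ := hu
    exact ⟨l • w, fun k => mul_mem l.2 (hw k), by rw [smul_dotProduct, smul_dotProduct, huw]⟩

theorem eq_zero_of_mul_dotProduct_add_dotProduct_eq_zero [Fintype ι] [DecidableEq κ]
    (hL : Monotone L) (hα : ∀ s t, s < t → α s ∈ L t)
    {C : ι → κ → K} (hC : ∀ s t k, C s k ∈ L t)
    (hdet : ∀ σ : κ → ι, Function.Injective σ → (Matrix.of (C ∘ σ)).det ≠ 0)
    {B : ι → β → K} (hB : ∀ s j, B s j ∈ L s)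
    (hαB : ∀ s ∈ redundantIndices K B, α s ∉ L s ∨ α s ≠ 0 ∧ B s = 0)
    (hcard : Fintype.card κ + Fintype.card β ≤ Fintype.card ι)
    {x : κ → K} {y : β → K} (hxy : ∀ s, α s * (C s ⬝ᵥ x) + B s ⬝ᵥ y = 0) : x = 0 := by
  have hκ : Fintype.card κ ≤ (redundantIndices K B).card := by
    have := card_le_card_redundantIndices_add_finrank (K := K) B
    rw [Module.finrank_fintype_fun_eq_card] at this
    omega
  obtain ⟨σ, hσ⟩ := Function.Embedding.exists_of_card_le_finset hκ
  have hred (k : κ) : σ k ∈ redundantIndices K B := hσ (Set.mem_range_self k)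
  have hrow (k : κ) : ∃ w : κ → K, (∀ l, w l ∈ L (σ k)) ∧ B (σ k) ⬝ᵥ y = w ⬝ᵥ x ∧
      (α (σ k) ∉ L (σ k) ∨ α (σ k) ≠ 0 ∧ w = 0) := by
    rcases hαB _ (hred k) with hαk | ⟨hαk, hBk⟩
    · obtain ⟨w, hw, hwx⟩ :=
        exists_dotProduct_eq_of_mem_span hL hα hC hB hxy (mem_redundantIndices.1 (hred k))
      exact ⟨w, hw, hwx, .inl hαk⟩
    · exact ⟨0, fun _ => zero_mem _, by simp [hBk], .inr ⟨hαk, rfl⟩⟩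
  choose w hw hwx hαw using hrow
  refine Matrix.eq_zero_of_mulVec_eq_zero
    (det_smul_add_ne_zero hL hα σ.injective (fun s k => hC (σ k) s) hw hαw (hdet σ σ.injective)) ?_
  ext k
  change (α (σ k) • C (σ k) + w k) ⬝ᵥ x = 0
  rw [add_dotProduct, smul_dotProduct, ← hwx, smul_eq_mul, hxy]

end Tower

section MulVec

open scoped Matrix

variable {K m n : Type*} [Field K] [Fintype n] {M : Matrix m n K}

lemma sum_filter_add_sum_filter_not_of_mulVec_eq_zero {x : n → K} (hx : M *ᵥ x = 0)
    {E : Finset n} (hxE : ∀ c ∉ E, x c = 0) (p : n → Prop) [DecidablePred p] (s : m) :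
    ∑ c ∈ E with p c, M s c * x c + ∑ c ∈ E with ¬p c, M s c * x c = 0 := by
  rw [Finset.sum_filter_add_sum_filter_not,
    Finset.sum_subset E.subset_univ fun c _ hc => by rw [hxE c hc, mul_zero]]
  exact congrFun hx s

lemma exists_mulVec_eq_zero_of_col_mem_span {i : n} {T : Set n} (hi : i ∉ T)
    (h : M.col i ∈ Submodule.span K (M.col '' T)) :
    ∃ x : n → K, M *ᵥ x = 0 ∧ x i = 1 ∧ ∀ c ∉ insert i T, x c = 0 := by
  classical
  obtain ⟨l, hl, hlsum⟩ := (Finsupp.mem_span_image_iff_linearCombination K).1 h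
  rw [Finsupp.mem_supported'] at hl
  have hMl : M *ᵥ l = M.col i := by
    rw [← hlsum, Finsupp.linearCombination_apply, Finsupp.sum_fintype _ _ (by simp),
      Matrix.mulVec_eq_sum]
    simp only [op_smul_eq_smul]
    rfl
  refine ⟨Pi.single i 1 - ⇑l, ?_, by simp [hl i hi], fun c hc => ?_⟩
  · rw [Matrix.mulVec_sub, Matrix.mulVec_single_one, hMl, sub_self]
  · rw [Set.mem_insert_iff, not_or] at hc
    simp [hc.1, hl c hc.2]

end MulVec

section StarCode

variable {K : Type} [Field K] {r a : ℕ}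

lemma AllSquareSubmatricesNonsingular.det_submatrix_ne_zero {C : Matrix (Fin r) (Fin a) K}
    (hC : AllSquareSubmatricesNonsingular C) {κ : Type*} [Fintype κ] [DecidableEq κ]
    {ρ : κ → Fin r} {σ : κ → Fin a} (hρ : Function.Injective ρ) (hσ : Function.Injective σ) :
    (C.submatrix ρ σ).det ≠ 0 := by
  let e := (Fintype.equivFin κ).symm
  rw [← Matrix.det_submatrix_equiv_self e]
  exact hC _ (ρ ∘ e) (σ ∘ e) (hρ.comp e.injective) (hσ.comp e.injective)

lemma starH_apply_of_lt (Γ : Matrix (Fin r) (Fin a) K) (s : Fin a) {c : Fin (a * (r + 1))}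
    (hc : (c : ℕ) < r) : starH Γ s c = Γ ⟨c, hc⟩ s := by
  have hca : (c : ℕ) < a * r := hc.trans_le (Nat.le_mul_of_pos_left r s.pos)
  simp [starH, hca, Nat.div_eq_of_lt hc, Nat.mod_eq_of_lt hc]

lemma starH_gammaMatrix_mem {F : ℕ → Subfield K} (hF : Monotone F)
    {C : Matrix (Fin r) (Fin a) K} (hC : ∀ i j, C i j ∈ F 0) {α : Fin a → K}
    (hα : ∀ j : Fin a, α j ∈ F j) (s : Fin a) {c : Fin (a * (r + 1))} (hc : r ≤ c) :
    starH (gammaMatrix C α) s c ∈ F (s - 1) := by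
  simp only [starH, gammaMatrix, Matrix.of_apply]
  split_ifs with hca hcs
  · have hr : 0 < r := Nat.pos_of_mul_pos_left (Nat.zero_lt_of_lt hca)
    have hblock : 1 ≤ (c : ℕ) / r := (Nat.one_le_div_iff hr).2 hc
    exact mul_mem (hF (Nat.zero_le _) (hC _ _)) (hF (by simp only; omega) (hα _))
  exacts [zero_mem _, neg_mem (one_mem _), zero_mem _]

lemma starH_apply_eq_zero_of_lt_of_le_one (Γ : Matrix (Fin r) (Fin a) K) {s t : Fin a}
    (hs : (s : ℕ) ≤ 1) (hts : t < s) {c : Fin (a * (r + 1))} (hc : r ≤ c)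
    (hsc : starH Γ s c ≠ 0) : starH Γ t c = 0 := by
  have ht : (t : ℕ) = 0 := by omega
  by_cases hca : (c : ℕ) < a * r
  · have hr : 0 < r := Nat.pos_of_mul_pos_left (Nat.zero_lt_of_lt hca)
    have hblock : 1 ≤ (c : ℕ) / r := (Nat.one_le_div_iff hr).2 hc
    simp only [starH, Matrix.of_apply, hca, ht]
    grind
  · simp only [starH, Matrix.of_apply, hca, dite_false] at hsc ⊢
    grind

lemma starH_row_eq_zero_of_mem_redundantIndices (Γ : Matrix (Fin r) (Fin a) K) {β : Type*}
    {e : β → Fin (a * (r + 1))} (he : ∀ j, r ≤ e j) {s : Fin a} (hs : (s : ℕ) ≤ 1)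
    (hred : s ∈ redundantIndices K fun t j => starH Γ t (e j)) :
    (fun j => starH Γ s (e j)) = 0 := by
  funext j
  by_contra hsj
  have hker : Submodule.span K ((fun t j => starH Γ t (e j)) '' Set.Iio s) ≤
      LinearMap.ker (LinearMap.proj (R := K) (φ := fun _ : β => K) j) := by
    rw [Submodule.span_le]
    rintro _ ⟨t, ht, rfl⟩
    exact starH_apply_eq_zero_of_lt_of_le_one Γ hs ht (he j) hsj
  exact hsj (hker (mem_redundantIndices.1 hred))

theorem eq_zero_of_mem_starCode {F : ℕ → Subfield K} (hF : Monotone F)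
    {C : Matrix (Fin r) (Fin a) K} (hC : ∀ i j, C i j ∈ F 0)
    (hCns : AllSquareSubmatricesNonsingular C) {α : Fin a → K} (hα : ∀ j : Fin a, α j ∈ F j)
    (hα_ne : ∀ j : Fin a, (j : ℕ) ≤ 1 → α j ≠ 0)
    (hα_notMem : ∀ j : Fin a, 2 ≤ (j : ℕ) → α j ∉ F (j - 1))
    {E : Finset (Fin (a * (r + 1)))} (hE : E.card ≤ a) {x : Fin (a * (r + 1)) → K}
    (hx : x ∈ starCode (gammaMatrix C α)) (hxE : ∀ c ∉ E, x c = 0)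
    {i : Fin (a * (r + 1))} (hi : (i : ℕ) < r) : x i = 0 := by
  by_cases hiE : i ∈ E
  swap
  · exact hxE i hiE
  set E₀ := E.filter fun c : Fin (a * (r + 1)) => (c : ℕ) < r
  set E₁ := E.filter fun c : Fin (a * (r + 1)) => ¬(c : ℕ) < r
  have hE₁ (c : E₁) : r ≤ (c : Fin (a * (r + 1))) := not_lt.1 (Finset.mem_filter.1 c.2).2
  let ρ (c : E₀) : Fin r := ⟨c, (Finset.mem_filter.1 c.2).2⟩
  have hρ : Function.Injective ρ := fun c d h => Subtype.ext (Fin.ext (Fin.mk.inj_iff.1 h))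
  have hcheck (s : Fin a) : α s * ((fun c => C (ρ c) s) ⬝ᵥ fun c : E₀ => x c) +
      (fun c : E₁ => starH (gammaMatrix C α) s c) ⬝ᵥ (fun c : E₁ => x c) = 0 := by
    rw [← sum_filter_add_sum_filter_not_of_mulVec_eq_zero hx hxE (fun c => (c : ℕ) < r) s,
      ← Finset.sum_coe_sort E₀, ← Finset.sum_coe_sort E₁, dotProduct, dotProduct, Finset.mul_sum]
    congr 1
    refine Finset.sum_congr rfl fun c _ => ?_
    rw [starH_apply_of_lt _ s (ρ c).2, gammaMatrix, Matrix.of_apply]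
    ring
  have hcard : Fintype.card E₀ + Fintype.card E₁ ≤ Fintype.card (Fin a) := by
    rwa [Fintype.card_coe, Fintype.card_coe, Finset.card_filter_add_card_filter_not,
      Fintype.card_fin]
  have hdet (σ : E₀ → Fin a) (hσ : Function.Injective σ) :
      (Matrix.of fun k c => C (ρ c) (σ k)).det ≠ 0 := by
    rw [← Matrix.det_transpose]
    exact hCns.det_submatrix_ne_zero hρ hσ
  have hx₀ : (fun c : E₀ => x c) = 0 := by
    refine eq_zero_of_mul_dotProduct_add_dotProduct_eq_zero (L := fun s : Fin a => F (s - 1))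
      (fun s t hst => hF (Nat.sub_le_sub_right hst 1))
      (fun s t hst => hF (Nat.le_sub_one_of_lt hst) (hα s))
      (fun s t c => hF (Nat.zero_le _) (hC (ρ c) s)) hdet
      (fun s c => starH_gammaMatrix_mem hF hC hα s (hE₁ c)) (fun s hs => ?_) hcard hcheck
    rcases le_or_gt (s : ℕ) 1 with hs1 | hs2
    · exact .inr ⟨hα_ne s hs1, starH_row_eq_zero_of_mem_redundantIndices _ hE₁ hs1 hs⟩
    · exact .inl (hα_notMem s hs2)
  exact congrFun hx₀ ⟨i, Finset.mem_filter.2 ⟨hiE, hi⟩⟩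

end StarCode

theorem starH_column_independence_general {K : Type} [Field K] {a r : ℕ}
    {F : ℕ → Subfield K} (hF : Monotone F)
    {C : Matrix (Fin r) (Fin a) K} (hC : ∀ i j, C i j ∈ F 0)
    (hCns : AllSquareSubmatricesNonsingular C) {α : Fin a → K}
    (hα01 : ∀ j : Fin a, (j : ℕ) ≤ 1 → α j ∈ F j ∧ α j ≠ 0)
    (hα : ∀ j : Fin a, 2 ≤ (j : ℕ) → α j ∈ F j ∧ α j ∉ F (j - 1))
    {E : Finset (Fin (a * (r + 1)))} (hE : E.card ≤ a)
    {i : Fin (a * (r + 1))} (hiE : i ∈ E) (hi : (i : ℕ) < r) :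
    (starH (gammaMatrix C α)).col i ∉
      Submodule.span K ((starH (gammaMatrix C α)).col '' {j | j ∈ E ∧ j ≠ i}) := by
  intro hspan
  obtain ⟨x, hx, hxi, hxE⟩ := exists_mulVec_eq_zero_of_col_mem_span (by simp) hspan
  have hx_supp : ∀ c ∉ E, x c = 0 := fun c hc => hxE c (by grind)
  have hα_mem : ∀ j : Fin a, α j ∈ F j := fun j =>
    (le_or_gt (j : ℕ) 1).elim (fun hj => (hα01 j hj).1) (fun hj => (hα j hj).1)
  have hxi_zero : x i = 0 := eq_zero_of_mem_starCode hF hC hCns hα_mem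
    (fun j hj => (hα01 j hj).2) (fun j hj => (hα j hj).2) hE hx hx_supp hi
  exact one_ne_zero (hxi.symm.trans hxi_zero)

/-- For the parity-check matrix `H = [Pᵀ | -I_a]` of `C*_{a,r}` and any erasure
set `E` of size `a` meeting `{0,…,r-1}`, for every `i ∈ E ∩ {0,…,r-1}` the
column `h_i` is not in the span of the columns `{h_j : j ∈ E, j > i}`. -/
theorem starH_column_independence
    (K : Type) [Field K] [Fintype K] (q a r : ℕ)
    (hq : IsPrimePow q) (ha : 2 ≤ a) (hr : 1 ≤ r)
    (Fsub : ℕ → Subfield K) (hmono : Monotone Fsub)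
    (hcard : ∀ j ≤ a - 1, Nat.card (Fsub j) = q ^ 2 ^ (j - 1))
    (htop : Fsub (a - 1) = ⊤)
    (C : Matrix (Fin r) (Fin a) K) (hC : ∀ i j, C i j ∈ Fsub 0)
    (hCns : AllSquareSubmatricesNonsingular C)
    (α : Fin a → K)
    (hα01 : ∀ j : Fin a, (j : ℕ) ≤ 1 → α j = 1)
    (hαmem : ∀ j : Fin a, 2 ≤ (j : ℕ) → α j ∈ Fsub (j : ℕ) ∧ α j ∉ Fsub ((j : ℕ) - 1))
    (E : Finset (Fin (a * (r + 1)))) (hEcard : E.card = a)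
    (hEmeets : ∃ i ∈ E, (i : ℕ) < r) :
    ∀ i ∈ E, (i : ℕ) < r →
      (fun s => starH (gammaMatrix C α) s i) ∉
        Submodule.span K ((fun j => fun s => starH (gammaMatrix C α) s j) ''
          {j : Fin (a * (r + 1)) | j ∈ E ∧ i < j}) := by
  exact fun i hiE hi hspan => starH_column_independence_general hmono hC hCns
    (fun j hj => by simp [hα01 j hj, one_mem]) hαmem hEcard.le hiE hi
    (Submodule.span_mono (Set.image_mono fun _ => And.imp_right ne_of_gt) hspan)
end

section
/- Let h be an integer with 1 ≤ h ≤ a and set W = {0,…,hr−1} ∪ {ar,…,ar+h−1}. For every erasure set E ⊆ W with |E| = h and any two codewords x, y ∈ C*_{a,r} satisfying x_j = y_j for all j ∈ W \ E, one has x_i = y_i for all i ∈ E ∩ {0,…,r−1}; i.e., the code symbols with indices in E ∩ {0,…,r−1} are uniquely determined by the code symbols with indices in W \ E alone. -/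
/-!
Subtracting two codewords reduces the claim to a homogeneous linear system: the unknowns are the
erased data symbols, the equations the parity checks whose parity symbol survives. Cutting the
system at the first row where it is no longer underdetermined makes it square, with at least as many
unknowns as equations among the first `i + 1` blocks and rows for every `i`. Such a staircase system
is nonsingular. If some such count is tight below the last row `n`, the system is block triangular
and splits. Otherwise let `b` be the first block. If `n ≤ b + 1`, counting puts all unknowns in
block `b`. If `n ≥ b + 2`, the scalar `α (n - b)` occurs only in row `n`, in front of the entries of
block `b`; all other coefficients lie in the subfield `Fsub (n - b - 1)`, which does not contain it.
The determinant is therefore `α (n - b) * D + D₀` with `D` and `D₀` in that subfield, `D` being the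
determinant of the system whose row `n` is replaced by its unscaled block `b` part; for `n ≤ b + 1`
this holds with `D₀ = 0`. In both cases it is nonzero as soon as `D` is. Once only such replaced
rows remain, the system is a square submatrix of `C`.
-/

open Finset

section Determines

variable {κ K : Type*} [Field K] {S : Finset κ} {L L' : Set (κ → K)} {u v w z : κ → K}

/-- The linear forms with coefficient vectors in `L`, restricted to the coordinates in `S`, have no
common zero other than `0`. This is the full column rank of a linear system with columns `S`. -/
def Determines (S : Finset κ) (L : Set (κ → K)) : Prop :=
  ∀ z : κ → K, (∀ l ∈ L, ∑ c ∈ S, l c * z c = 0) → ∀ c ∈ S, z c = 0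

theorem Determines.mono (h : Determines S L) (hL : L ⊆ L') : Determines S L' :=
  fun z hz ↦ h z fun l hl ↦ hz l (hL hl)

theorem Determines.insert_of_eq_smul (h : Determines S (insert u L)) {β : K} (hβ : β ≠ 0)
    (hv : ∀ c ∈ S, v c = β * u c) : Determines S (insert v L) := by
  intro z hz
  rw [Set.forall_mem_insert] at hz
  refine h z (Set.forall_mem_insert.2 ⟨?_, hz.2⟩)
  have hβu : β * ∑ c ∈ S, u c * z c = 0 := by
    rw [← hz.1, mul_sum]
    exact sum_congr rfl fun c hc ↦ by rw [hv c hc, mul_assoc]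
  exact (mul_eq_zero.1 hβu).resolve_left hβ

theorem Determines.of_block_triangular {L₁ L₂ : Set (κ → K)} (p : κ → Prop) [DecidablePred p]
    (h₁ : Determines {c ∈ S | p c} L₁) (h₂ : Determines {c ∈ S | ¬p c} L₂)
    (hL₁ : ∀ l ∈ L₁, ∀ c ∈ S, ¬p c → l c = 0) : Determines S (L₁ ∪ L₂) := by
  intro z hz
  have hz₁ : ∀ c ∈ S, p c → z c = 0 := by
    refine fun c hc hpc ↦ h₁ z (fun l hl ↦ ?_) c (mem_filter.2 ⟨hc, hpc⟩)
    rw [← hz l (.inl hl)]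
    refine sum_filter_of_ne fun c hc hne ↦ ?_
    contrapose! hne
    rw [hL₁ l hl c hc hne, zero_mul]
  intro c hc
  by_cases hpc : p c
  · exact hz₁ c hc hpc
  refine h₂ z (fun l hl ↦ ?_) c (mem_filter.2 ⟨hc, hpc⟩)
  rw [← hz l (.inr hl)]
  refine sum_filter_of_ne fun c hc hne hpc ↦ hne ?_
  rw [hz₁ c hc hpc, mul_zero]

theorem Determines.eq_div_mul (h : Determines S (insert u L))
    (hw : ∀ l ∈ L, ∑ c ∈ S, l c * w c = 0) (huw : ∑ c ∈ S, u c * w c ≠ 0)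
    (hz : ∀ l ∈ L, ∑ c ∈ S, l c * z c = 0) :
    ∀ c ∈ S, z c = (∑ c ∈ S, u c * z c) / (∑ c ∈ S, u c * w c) * w c := by
  set d := (∑ c ∈ S, u c * z c) / (∑ c ∈ S, u c * w c)
  have sum_mul_sub : ∀ l : κ → K, ∑ c ∈ S, l c * (z c - d * w c) =
      ∑ c ∈ S, l c * z c - d * ∑ c ∈ S, l c * w c := fun l ↦ by
    rw [mul_sum, ← sum_sub_distrib]
    exact sum_congr rfl fun c _ ↦ by ring
  refine fun c hc ↦ sub_eq_zero.1 (h (fun c ↦ z c - d * w c) ?_ c hc)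
  refine Set.forall_mem_insert.2 ⟨?_, fun l hl ↦ ?_⟩
  · rw [sum_mul_sub, div_mul_cancel₀ _ huw, sub_self]
  · rw [sum_mul_sub, hz l hl, hw l hl, mul_zero, sub_zero]

theorem exists_common_zero_mem_subfield (F : Subfield K) (hcard : L.encard < #S)
    (hL : ∀ l ∈ L, ∀ c ∈ S, l c ∈ F) :
    ∃ w : κ → K, (∀ c, w c ∈ F) ∧ (∃ c ∈ S, w c ≠ 0) ∧ ∀ l ∈ L, ∑ c ∈ S, l c * w c = 0 := by
  classical
  have hfin : L.Finite := Set.encard_lt_top_iff.1 (hcard.trans (ENat.natCast_lt_top _))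
  have := hfin.fintype
  let A : Matrix L S F := .of fun l c ↦ ⟨l.1 c, hL l l.2 c c.2⟩
  have hker : LinearMap.ker A.mulVecLin ≠ ⊥ := by
    refine LinearMap.ker_ne_bot_of_finrank_lt ?_
    rwa [Module.finrank_fintype_fun_eq_card, Module.finrank_fintype_fun_eq_card,
      Fintype.card_coe, ← Nat.cast_lt (α := ℕ∞), Set.coe_fintypeCard]
  obtain ⟨w, hw, hw0⟩ := (Submodule.ne_bot_iff _).1 hker
  obtain ⟨c₀, hc₀⟩ := Function.ne_iff.1 hw0
  refine ⟨fun c ↦ if hc : c ∈ S then w ⟨c, hc⟩ else 0, fun c ↦ ?_, ⟨c₀, c₀.2, by simpa using hc₀⟩,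
    fun l hl ↦ ?_⟩
  · dsimp only
    split_ifs
    exacts [(w _).2, F.zero_mem]
  · have hAw : (A.mulVec w ⟨l, hl⟩ : K) = 0 := congrArg Subtype.val (congrFun hw ⟨l, hl⟩)
    rw [← sum_coe_sort]
    simpa [Matrix.mulVec, dotProduct, A] using hAw

theorem Determines.insert_smul_add {F : Subfield K} {β : K} (h : Determines S (insert u L))
    (hβ : β ∉ F) (hcard : L.encard < #S) (hL : ∀ l ∈ L, ∀ c ∈ S, l c ∈ F)
    (hu : ∀ c ∈ S, u c ∈ F) (hv : ∀ c ∈ S, v c ∈ F) : Determines S (insert (β • u + v) L) := by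
  obtain ⟨w, hwF, ⟨c₀, hc₀, hwc₀⟩, hwL⟩ := exists_common_zero_mem_subfield F hcard hL
  have huw : ∑ c ∈ S, u c * w c ≠ 0 := fun huw ↦
    hwc₀ (h w (Set.forall_mem_insert.2 ⟨huw, hwL⟩) c₀ hc₀)
  have hβuv : β * ∑ c ∈ S, u c * w c + ∑ c ∈ S, v c * w c ≠ 0 := by
    refine fun h0 ↦ hβ ?_
    rw [(eq_div_iff huw).2 (eq_neg_of_add_eq_zero_left h0)]
    exact F.div_mem (F.neg_mem (F.sum_mem fun c hc ↦ F.mul_mem (hv c hc) (hwF c)))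
      (F.sum_mem fun c hc ↦ F.mul_mem (hu c hc) (hwF c))
  intro z hz
  rw [Set.forall_mem_insert] at hz
  have hzw := h.eq_div_mul hwL huw hz.2
  set d := (∑ c ∈ S, u c * z c) / (∑ c ∈ S, u c * w c)
  have hd : d * (β * ∑ c ∈ S, u c * w c + ∑ c ∈ S, v c * w c) = 0 := by
    rw [← hz.1, mul_sum, ← sum_add_distrib, mul_sum]
    refine sum_congr rfl fun c hc ↦ ?_
    rw [hzw c hc, Pi.add_apply, Pi.smul_apply, smul_eq_mul]
    ring
  intro c hc
  rw [hzw c hc, (mul_eq_zero.1 hd).resolve_right hβuv, zero_mul]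

end Determines

section Staircase

variable {κ : Type*} {blk : κ → ℕ} {a b n i : ℕ} {S : Finset κ} {R T : Finset ℕ}

/-- The shape of a square linear system with columns `S`, column `c` lying in block `blk c`, with
rows `R` in which row `i` involves the blocks `b, …, i`, and with rows `T` which involve block `b`
only. The last condition is Hall's condition for such a system to be nonsingular. -/
structure IsStaircase (blk : κ → ℕ) (a b : ℕ) (S : Finset κ) (R T : Finset ℕ) : Prop where
  le_blk : ∀ c ∈ S, b ≤ blk c
  rows_subset : R ⊆ Ico b a
  leading_subset : T ⊆ Ico b a
  disjoint : Disjoint R T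
  card_eq : #S = #R + #T
  card_le : ∀ i, b ≤ i → #T + #{j ∈ R | j ≤ i} ≤ #{c ∈ S | blk c ≤ i}

theorem card_filter_le_add_card_filter_lt_and_le {ι : Type*} (s : Finset ι) (f : ι → ℕ) {i j : ℕ}
    (hij : i ≤ j) : #{c ∈ s | f c ≤ i} + #{c ∈ s | ¬f c ≤ i ∧ f c ≤ j} = #{c ∈ s | f c ≤ j} := by
  rw [← card_filter_add_card_filter_not (s := {c ∈ s | f c ≤ j}) (f · ≤ i), filter_filter,
    filter_filter]
  congr 2 <;> exact filter_congr fun c _ ↦ by omega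

theorem IsStaircase.blk_eq_of_card_le (h : IsStaircase blk a b S R T)
    (hcard : #S ≤ #{c ∈ S | blk c ≤ b}) : ∀ c ∈ S, blk c = b := fun c hc ↦
  (filter_eq_self.1 (eq_of_subset_of_card_le (filter_subset _ S) hcard) c hc).antisymm
    (h.le_blk c hc)

theorem IsStaircase.prefix_of_tight (h : IsStaircase blk a b S R T) (hbi : b ≤ i)
    (htight : #{c ∈ S | blk c ≤ i} = #T + #{j ∈ R | j ≤ i}) :
    IsStaircase blk a b {c ∈ S | blk c ≤ i} {j ∈ R | j ≤ i} T where
  le_blk c hc := h.le_blk c (mem_filter.1 hc).1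
  rows_subset := (filter_subset _ R).trans h.rows_subset
  leading_subset := h.leading_subset
  disjoint := disjoint_of_subset_left (filter_subset _ R) h.disjoint
  card_eq := by rw [htight, add_comm]
  card_le j hbj := by
    simp only [filter_filter, ← le_min_iff]
    exact h.card_le _ (le_min hbi hbj)

theorem IsStaircase.suffix_of_tight (h : IsStaircase blk a b S R T) (hbi : b ≤ i)
    (htight : #{c ∈ S | blk c ≤ i} = #T + #{j ∈ R | j ≤ i}) :
    IsStaircase blk a (i + 1) {c ∈ S | ¬blk c ≤ i} {j ∈ R | ¬j ≤ i} ∅ where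
  le_blk c hc := not_le.1 (mem_filter.1 hc).2
  rows_subset j hj := by
    obtain ⟨hjR, hij⟩ := mem_filter.1 hj
    exact mem_Ico.2 ⟨not_le.1 hij, (mem_Ico.1 (h.rows_subset hjR)).2⟩
  leading_subset := empty_subset _
  disjoint := disjoint_empty_right _
  card_eq := by
    have hS := card_filter_add_card_filter_not (s := S) (blk · ≤ i)
    have hR := card_filter_add_card_filter_not (s := R) (· ≤ i)
    have := h.card_eq
    rw [card_empty]
    omega
  card_le j hij := by
    have hS := card_filter_le_add_card_filter_lt_and_le S blk (i.le_succ.trans hij)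
    have hR := card_filter_le_add_card_filter_lt_and_le R id (i.le_succ.trans hij)
    have := h.card_le j (by omega)
    simp only [id] at hR
    rw [filter_filter, filter_filter, card_empty]
    omega

theorem IsStaircase.move_row (h : IsStaircase blk a b S R T) (hn : n ∈ R)
    (hslack : ∀ i, b ≤ i → i < n → #T + #{j ∈ R | j ≤ i} < #{c ∈ S | blk c ≤ i}) :
    IsStaircase blk a b S (R.erase n) (insert n T) where
  le_blk := h.le_blk
  rows_subset := (erase_subset n R).trans h.rows_subset
  leading_subset := insert_subset (h.rows_subset hn) h.leading_subset
  disjoint := disjoint_insert_right.2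
    ⟨notMem_erase n R, disjoint_of_subset_left (erase_subset n R) h.disjoint⟩
  card_eq := by
    have hR := card_erase_add_one hn
    rw [h.card_eq, card_insert_of_notMem (disjoint_left.1 h.disjoint hn)]
    omega
  card_le i hbi := by
    rw [card_insert_of_notMem (disjoint_left.1 h.disjoint hn)]
    rcases lt_or_ge i n with hin | hni
    · have hR : #{j ∈ R.erase n | j ≤ i} ≤ #{j ∈ R | j ≤ i} := by grw [erase_subset]
      have := hslack i hbi hin
      omega
    · have hR : #{j ∈ R.erase n | j ≤ i} + 1 = #{j ∈ R | j ≤ i} := by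
        rw [filter_erase, card_erase_add_one (mem_filter.2 ⟨hn, hni⟩)]
      have := h.card_le i hbi
      omega

theorem IsStaircase.card_le_of_last_le_succ (h : IsStaircase blk a b S R T) (hn : n ∈ R)
    (hlast : ∀ i ∈ R, i ≤ n)
    (hslack : ∀ i, b ≤ i → i < n → #T + #{j ∈ R | j ≤ i} < #{c ∈ S | blk c ≤ i})
    (hnb : n ≤ b + 1) : #S ≤ #{c ∈ S | blk c ≤ b} := by
  have hbn : b ≤ n := (mem_Ico.1 (h.rows_subset hn)).1
  have hcard := h.card_eq
  rcases hbn.eq_or_lt with rfl | hbn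
  · have := h.card_le b le_rfl
    rw [filter_true_of_mem hlast] at this
    omega
  · have hR : #(R.erase n) ≤ #{j ∈ R | j ≤ b} := card_le_card fun j hj ↦ by
      obtain ⟨hjn, hjR⟩ := mem_erase.1 hj
      have := hlast j hjR
      exact mem_filter.2 ⟨hjR, by omega⟩
    have := card_erase_add_one hn
    have := hslack b le_rfl hbn
    omega

theorem exists_isStaircase_prefix (hR : R ⊆ range a) (hcard : #S ≤ #R)
    (hblk : ∃ c ∈ S, blk c = 0) :
    ∃ k, 0 < k ∧ IsStaircase blk a 0 {c ∈ S | blk c < k} {j ∈ R | j < k} ∅ := by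
  classical
  have hex : ∃ l, #{c ∈ S | blk c < l + 1} ≤ #{j ∈ R | j < l + 1} := by
    refine ⟨a, (card_filter_le _ _).trans (hcard.trans (card_le_card fun j hj ↦ ?_))⟩
    exact mem_filter.2 ⟨hj, (mem_range.1 (hR hj)).trans a.lt_succ_self⟩
  obtain ⟨l, hle, hmin⟩ : ∃ l, #{c ∈ S | blk c < l + 1} ≤ #{j ∈ R | j < l + 1} ∧
      ∀ m < l, #{j ∈ R | j < m + 1} < #{c ∈ S | blk c < m + 1} :=
    ⟨Nat.find hex, Nat.find_spec hex, fun m hm ↦ not_le.1 (Nat.find_min hex hm)⟩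
  have hlt : #{j ∈ R | j < l} < #{c ∈ S | blk c < l + 1} := by
    rcases l with _ | m
    · obtain ⟨c, hc, hc0⟩ := hblk
      simpa using ⟨c, mem_filter.2 ⟨hc, hc0⟩⟩
    · refine (hmin m m.lt_succ_self).trans_le (card_le_card ?_)
      exact monotone_filter_right S fun c _ hc ↦ hc.trans (m + 1).lt_succ_self
  have hge : #{j ∈ R | j < l + 1} ≤ #{c ∈ S | blk c < l + 1} := by
    have hsub : ({j ∈ R | j < l + 1} : Finset ℕ) ⊆ insert l {j ∈ R | j < l} := fun j hj ↦ by
      simp only [mem_insert, mem_filter] at hj ⊢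
      grind
    exact (card_le_card hsub).trans ((card_insert_le _ _).trans hlt)
  have hall : ∀ m ≤ l, #{j ∈ R | j < m + 1} ≤ #{c ∈ S | blk c < m + 1} := fun m hm ↦
    hm.eq_or_lt.elim (fun h ↦ h ▸ hge) fun h ↦ (hmin m h).le
  refine ⟨l + 1, l.succ_pos, fun _ _ ↦ Nat.zero_le _, ?_, empty_subset _, disjoint_empty_right _,
    ?_, fun i _ ↦ ?_⟩
  · rw [← range_eq_Ico]
    exact (filter_subset _ R).trans hR
  · rw [card_empty, add_zero, hle.antisymm hge]
  · simpa only [card_empty, zero_add, filter_filter, Nat.lt_succ_iff, le_min_iff] using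
      hall (min l i) (min_le_left l i)

end Staircase

section StaircaseSystem

variable {κ K : Type*} [Field K] {blk : κ → ℕ} {coef : κ → ℕ → K} {α : ℕ → K} {a b n i : ℕ}
  {S : Finset κ} {R T : Finset ℕ}

/-- Row `i` of a lower triangular block Toeplitz matrix: on a column `c` of block `j = blk c ≤ i`
it is the `(i - j)`-th coefficient of `c`, scaled by `α (i - j)`. -/
def parityRow (blk : κ → ℕ) (coef : κ → ℕ → K) (α : ℕ → K) (i : ℕ) (c : κ) : K :=
  if blk c ≤ i then coef c (i - blk c) * α (i - blk c) else 0

/-- The part of row `t` supported on block `b`, without its scaling factor `α (t - b)`. -/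
def leadingRow (blk : κ → ℕ) (coef : κ → ℕ → K) (b t : ℕ) (c : κ) : K :=
  if blk c = b then coef c (t - b) else 0

/-- The linear forms of a staircase system: the full rows `R` and the leading parts, with respect
to block `b`, of the rows `T`. -/
def staircaseRows (blk : κ → ℕ) (coef : κ → ℕ → K) (α : ℕ → K) (b : ℕ) (R T : Finset ℕ) :
    Set (κ → K) :=
  parityRow blk coef α '' R ∪ leadingRow blk coef b '' T

theorem encard_staircaseRows_le : (staircaseRows blk coef α b R T).encard ≤ #R + #T := by
  grw [staircaseRows, Set.encard_union_le, Set.encard_image_le, Set.encard_image_le,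
    Set.encard_coe_eq_coe_finsetCard, Set.encard_coe_eq_coe_finsetCard]

theorem staircaseRows_insert_left :
    staircaseRows blk coef α b (insert n R) T =
      insert (parityRow blk coef α n) (staircaseRows blk coef α b R T) := by
  simp only [staircaseRows, coe_insert, Set.image_insert_eq, Set.insert_union]

theorem staircaseRows_insert_right :
    staircaseRows blk coef α b R (insert n T) =
      insert (leadingRow blk coef b n) (staircaseRows blk coef α b R T) := by
  simp only [staircaseRows, coe_insert, Set.image_insert_eq, Set.union_insert]

theorem staircaseRows_eq_zero_of_lt (hbi : b ≤ i) (hR : ∀ j ∈ R, j ≤ i) :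
    ∀ l ∈ staircaseRows blk coef α b R T, ∀ c, i < blk c → l c = 0 := by
  rintro _ (⟨j, hj, rfl⟩ | ⟨t, -, rfl⟩) c hc
  · exact if_neg ((hR j hj).trans_lt hc).not_ge
  · exact if_neg (hbi.trans_lt hc).ne'

theorem determines_staircaseRows_of_split (hbi : b ≤ i)
    (hprefix : Determines {c ∈ S | blk c ≤ i} (staircaseRows blk coef α b {j ∈ R | j ≤ i} T))
    (hsuffix : Determines {c ∈ S | ¬blk c ≤ i}
      (staircaseRows blk coef α (i + 1) {j ∈ R | ¬j ≤ i} ∅)) :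
    Determines S (staircaseRows blk coef α b R T) := by
  refine (hprefix.of_block_triangular (blk · ≤ i) hsuffix fun l hl c _ hc ↦ ?_).mono ?_
  · exact staircaseRows_eq_zero_of_lt hbi (fun j hj ↦ (mem_filter.1 hj).2) l hl c (not_le.1 hc)
  · refine Set.union_subset (Set.union_subset_union_left _ ?_) (Set.union_subset_union ?_ ?_)
    · exact Set.image_mono (filter_subset _ R)
    · exact Set.image_mono (filter_subset _ R)
    · simp

theorem determines_leadingRow_image
    (hmds : ∀ (X : Finset κ) (Y : Finset ℕ), (∀ c ∈ X, blk c = b) → Y ⊆ range a → #X = #Y →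
      Determines X ((fun k c ↦ coef c k) '' Y))
    (hS : ∀ c ∈ S, blk c = b) (hT : T ⊆ Ico b a) (hcard : #S = #T) :
    Determines S (leadingRow blk coef b '' T) := by
  classical
  have hinj : Set.InjOn (· - b) (T : Set ℕ) := fun t ht s hs hts ↦ by
    have := mem_Ico.1 (hT ht)
    have := mem_Ico.1 (hT hs)
    simp only at hts
    omega
  have hY : T.image (· - b) ⊆ range a := fun k hk ↦ by
    obtain ⟨t, ht, rfl⟩ := mem_image.1 hk
    exact mem_range.2 ((Nat.sub_le t b).trans_lt (mem_Ico.1 (hT ht)).2)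
  intro z hz
  refine hmds S (T.image (· - b)) hS hY (by rw [hcard, card_image_of_injOn hinj]) z ?_
  rintro _ ⟨k, hk, rfl⟩
  obtain ⟨t, ht, rfl⟩ := mem_image.1 hk
  rw [← hz _ ⟨t, ht, rfl⟩]
  exact sum_congr rfl fun c hc ↦ by rw [leadingRow, if_pos (hS c hc)]

section Tower

variable {Fs : ℕ → Subfield K}

theorem parityRow_mem (hmono : Monotone Fs) (hcoef : ∀ c k, coef c k ∈ Fs 0)
    (hα : ∀ k, α k ∈ Fs k) {m : ℕ} {c : κ} (hic : i ≤ blk c + m) :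
    parityRow blk coef α i c ∈ Fs m := by
  rw [parityRow]
  split_ifs
  · exact mul_mem (hmono m.zero_le (hcoef c _)) (hmono (Nat.sub_le_iff_le_add'.2 hic) (hα _))
  · exact zero_mem _

theorem leadingRow_mem (hcoef : ∀ c k, coef c k ∈ Fs 0) (t : ℕ) (c : κ) :
    leadingRow blk coef b t c ∈ Fs 0 := by
  rw [leadingRow]
  split_ifs
  exacts [hcoef c _, zero_mem _]

theorem staircaseRows_mem (hmono : Monotone Fs) (hcoef : ∀ c k, coef c k ∈ Fs 0)
    (hα : ∀ k, α k ∈ Fs k) {m : ℕ} (hS : ∀ c ∈ S, b ≤ blk c) (hR : ∀ i ∈ R, i ≤ b + m) :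
    ∀ l ∈ staircaseRows blk coef α b R T, ∀ c ∈ S, l c ∈ Fs m := by
  rintro _ (⟨i, hi, rfl⟩ | ⟨t, -, rfl⟩) c hc
  · exact parityRow_mem hmono hcoef hα ((hR i hi).trans (Nat.add_le_add_right (hS c hc) m))
  · exact hmono m.zero_le (leadingRow_mem hcoef t c)

theorem parityRow_sub_smul_leadingRow_mem (hmono : Monotone Fs) (hcoef : ∀ c k, coef c k ∈ Fs 0)
    (hα : ∀ k, α k ∈ Fs k) (hbn : b ≤ n) {c : κ} (hc : b ≤ blk c) :
    (parityRow blk coef α n - α (n - b) • leadingRow blk coef b n) c ∈ Fs (n - b - 1) := by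
  rw [Pi.sub_apply, Pi.smul_apply, smul_eq_mul]
  rcases hc.eq_or_lt with rfl | hc
  · rw [parityRow, leadingRow, if_pos hbn, if_pos rfl, mul_comm, sub_self]
    exact zero_mem _
  · rw [leadingRow, if_neg hc.ne', mul_zero, sub_zero]
    exact parityRow_mem hmono hcoef hα (by omega)

theorem IsStaircase.determines_of_move_last (h : IsStaircase blk a b S R T) (hmono : Monotone Fs)
    (hcoef : ∀ c k, coef c k ∈ Fs 0) (hα : ∀ k, α k ∈ Fs k)
    (hα_ne : ∀ k < a, k ≤ 1 → α k ≠ 0) (hα_notMem : ∀ k < a, 2 ≤ k → α k ∉ Fs (k - 1))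
    (hn : n ∈ R) (hlast : ∀ i ∈ R, i ≤ n)
    (hslack : ∀ i, b ≤ i → i < n → #T + #{j ∈ R | j ≤ i} < #{c ∈ S | blk c ≤ i})
    (hmove : Determines S (staircaseRows blk coef α b (R.erase n) (insert n T))) :
    Determines S (staircaseRows blk coef α b R T) := by
  obtain ⟨hbn, hna⟩ := mem_Ico.1 (h.rows_subset hn)
  rw [staircaseRows_insert_right] at hmove
  rw [← insert_erase hn, staircaseRows_insert_left]
  rcases le_or_gt n (b + 1) with hnb | hnb
  · have hS := h.blk_eq_of_card_le (h.card_le_of_last_le_succ hn hlast hslack hnb)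
    refine hmove.insert_of_eq_smul (hα_ne (n - b) (by omega) (by omega)) fun c hc ↦ ?_
    rw [parityRow, leadingRow, hS c hc, if_pos hbn, if_pos rfl, mul_comm]
  · rw [← add_sub_cancel (α (n - b) • leadingRow blk coef b n) (parityRow blk coef α n)]
    refine hmove.insert_smul_add (hα_notMem (n - b) (by omega) (by omega)) ?_
      (staircaseRows_mem hmono hcoef hα h.le_blk fun i hi ↦ ?_)
      (fun c _ ↦ hmono (Nat.zero_le _) (leadingRow_mem hcoef n c))
      (fun c hc ↦ parityRow_sub_smul_leadingRow_mem hmono hcoef hα hbn (h.le_blk c hc))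
    · refine encard_staircaseRows_le.trans_lt ?_
      rw [h.card_eq, ← card_erase_add_one hn]
      norm_cast
      omega
    · obtain ⟨hin, hiR⟩ := mem_erase.1 hi
      have := hlast i hiR
      omega

theorem IsStaircase.determines {b : ℕ} {S : Finset κ} {R T : Finset ℕ}
    (h : IsStaircase blk a b S R T) (hmono : Monotone Fs) (hcoef : ∀ c k, coef c k ∈ Fs 0)
    (hα : ∀ k, α k ∈ Fs k) (hα_ne : ∀ k < a, k ≤ 1 → α k ≠ 0)
    (hα_notMem : ∀ k < a, 2 ≤ k → α k ∉ Fs (k - 1))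
    (hmds : ∀ (b : ℕ) (X : Finset κ) (Y : Finset ℕ), (∀ c ∈ X, blk c = b) → Y ⊆ range a →
      #X = #Y → Determines X ((fun k c ↦ coef c k) '' Y)) :
    Determines S (staircaseRows blk coef α b R T) := by
  rcases R.eq_empty_or_nonempty with rfl | hR
  · have hcard : #S = #T := by simpa using h.card_eq
    have hS := h.blk_eq_of_card_le (by simpa [hcard] using h.card_le b le_rfl)
    simpa [staircaseRows] using determines_leadingRow_image (hmds b) hS h.leading_subset hcard
  have hn := R.max'_mem hR
  set n := R.max' hR
  have : n < a := (mem_Ico.1 (h.rows_subset hn)).2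
  by_cases htight : ∃ i, b ≤ i ∧ i < n ∧ #{c ∈ S | blk c ≤ i} ≤ #T + #{j ∈ R | j ≤ i}
  · obtain ⟨i, hbi, hin, hle⟩ := htight
    have htight := hle.antisymm (h.card_le i hbi)
    have : #{j ∈ R | j ≤ i} < #R :=
      card_lt_card (filter_ssubset.2 ⟨n, hn, hin.not_ge⟩)
    have : #{j ∈ R | i < j} ≤ #R := card_filter_le _ _
    exact determines_staircaseRows_of_split hbi
      ((h.prefix_of_tight hbi htight).determines hmono hcoef hα hα_ne hα_notMem hmds)
      ((h.suffix_of_tight hbi htight).determines hmono hcoef hα hα_ne hα_notMem hmds)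
  · push Not at htight
    have : #(R.erase n) < #R := card_erase_lt_of_mem hn
    exact h.determines_of_move_last hmono hcoef hα hα_ne hα_notMem hn (fun i ↦ R.le_max' i) htight
      ((h.move_row hn htight).determines hmono hcoef hα hα_ne hα_notMem hmds)
termination_by #R + (a - b)

end Tower

end StaircaseSystem

section StarCode

variable {K : Type} [Field K] {r a : ℕ}

theorem AllSquareSubmatricesNonsingular.determines {C : Matrix (Fin r) (Fin a) K}
    (hC : AllSquareSubmatricesNonsingular C) {κ : Type*} {X : Finset κ} {ρ : κ → Fin r}
    (hρ : Set.InjOn ρ X) {Y : Finset (Fin a)} (hXY : #X = #Y) :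
    Determines X ((fun k c ↦ C (ρ c) k) '' Y) := by
  let eX := X.equivFin.symm
  let eY := (Y.equivFinOfCardEq hXY.symm).symm
  have hdet := hC (#X) (fun i ↦ ρ (eX i)) (fun k ↦ eY k) (hρ.injective.comp eX.injective)
    (Subtype.val_injective.comp eY.injective)
  intro z hz c hc
  have hvecMul : Matrix.vecMul (fun i ↦ z (eX i))
      (C.submatrix (fun i ↦ ρ (eX i)) (fun k ↦ eY k)) = 0 := by
    funext k
    have hk := hz _ ⟨eY k, (eY k).2, rfl⟩
    rw [← sum_coe_sort, ← Equiv.sum_comp eX] at hk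
    rw [Pi.zero_apply, ← hk, Matrix.vecMul, dotProduct]
    exact sum_congr rfl fun i _ ↦ mul_comm _ _
  simpa [eX] using congrFun (Matrix.eq_zero_of_vecMul_eq_zero hdet hvecMul) (X.equivFin ⟨c, hc⟩)

theorem sub_mem_starCode {Γ : Matrix (Fin r) (Fin a) K} {x y : Fin (a * (r + 1)) → K}
    (hx : x ∈ starCode Γ) (hy : y ∈ starCode Γ) : x - y ∈ starCode Γ := by
  rw [starCode, Set.mem_ofPred_eq] at hx hy ⊢
  rw [Matrix.mulVec_sub, hx, hy, sub_zero]

theorem card_filter_lt_le_card_filter_range {N h d t : ℕ} {E : Finset (Fin N)} (hE : #E ≤ h)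
    (hdt : d ≤ t) :
    #{c ∈ E | c.val < d} ≤ #{i ∈ range h | ∀ c ∈ E, c.val ≠ t + i} := by
  have hsub : ({i ∈ range h | ¬∀ c ∈ E, c.val ≠ t + i} : Finset ℕ) ⊆
      ({c ∈ E | ¬c.val < d} : Finset (Fin N)).image (fun c ↦ c.val - t) := fun i hi ↦ by
    simp only [mem_filter, ne_eq, not_forall, not_not] at hi
    obtain ⟨-, c, hc, hci⟩ := hi
    exact mem_image.2 ⟨c, mem_filter.2 ⟨hc, by omega⟩, by omega⟩
  have hle := (card_le_card hsub).trans card_image_le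
  have hsplitE := card_filter_add_card_filter_not (s := E) (fun c ↦ c.val < d)
  have hsplit := card_filter_add_card_filter_not (s := range h) (∀ c ∈ E, c.val ≠ t + ·)
  rw [card_range] at hsplit
  omega

theorem extend_val_mem {F : ℕ → Subfield K} {f : Fin a → K} (hf : ∀ k : Fin a, f k ∈ F k)
    (k : ℕ) : Function.extend Fin.val f 0 k ∈ F k := by
  by_cases hk : k < a
  · exact (Fin.val_injective.extend_apply f 0 ⟨k, hk⟩).symm ▸ hf ⟨k, hk⟩
  · rw [Function.extend_apply' _ _ _ fun ⟨j, hj⟩ ↦ hk (hj ▸ j.2)]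
    exact zero_mem _

/-- The block of the symbol with index `c` in `C*_{a,r}`; its position in the block is `c % r`.
This is meaningful for the data symbols, those with `c < a * r`. -/
def symbolBlock (r : ℕ) {a : ℕ} (c : Fin (a * (r + 1))) : ℕ :=
  (c : ℕ) / r

section

variable [NeZero r] {C : Matrix (Fin r) (Fin a) K} {α : Fin a → K}

/-- The row of `C` at the position of the symbol with index `c` in its block, extended by `0`. -/
noncomputable def symbolCoeff (C : Matrix (Fin r) (Fin a) K) (c : Fin (a * (r + 1))) : ℕ → K :=
  Function.extend Fin.val (C (Fin.ofNat r c)) 0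

theorem symbolCoeff_val (c : Fin (a * (r + 1))) (k : Fin a) :
    symbolCoeff C c k = C (Fin.ofNat r c) k :=
  Fin.val_injective.extend_apply _ _ k

theorem injOn_ofNat_of_symbolBlock_eq {X : Finset (Fin (a * (r + 1)))} {b : ℕ}
    (hX : ∀ c ∈ X, symbolBlock r c = b) :
    Set.InjOn (fun c : Fin (a * (r + 1)) ↦ Fin.ofNat r c) X := fun c hc d hd hcd ↦ by
  have hmod : (c : ℕ) % r = d % r := congrArg Fin.val hcd
  have hdiv : (c : ℕ) / r = d / r := (hX c hc).trans (hX d hd).symm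
  exact Fin.ext (by rw [← Nat.div_add_mod c r, ← Nat.div_add_mod d r, hmod, hdiv])

theorem AllSquareSubmatricesNonsingular.determines_symbolCoeff
    (hC : AllSquareSubmatricesNonsingular C) (b : ℕ) (X : Finset (Fin (a * (r + 1))))
    (Y : Finset ℕ) (hX : ∀ c ∈ X, symbolBlock r c = b) (hY : Y ⊆ range a) (hXY : #X = #Y) :
    Determines X ((fun k c ↦ symbolCoeff C c k) '' Y) := by
  have hY' : ∀ k ∈ Y, k < a := fun k hk ↦ mem_range.1 (hY hk)
  refine (hC.determines (Y := Y.attachFin hY') (injOn_ofNat_of_symbolBlock_eq hX)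
    (by rwa [card_attachFin])).mono ?_
  rintro _ ⟨k, hk, rfl⟩
  exact ⟨k, (mem_attachFin hY').1 hk, funext fun c ↦ symbolCoeff_val c k⟩

theorem starH_gammaMatrix_of_lt {i : Fin a} {c : Fin (a * (r + 1))} (hc : (c : ℕ) < a * r) :
    starH (gammaMatrix C α) i c =
      parityRow (symbolBlock r) (symbolCoeff C) (Function.extend Fin.val α 0) i c := by
  rw [starH, Matrix.of_apply, dif_pos hc, parityRow, symbolBlock]
  split_ifs with hci
  · let k : Fin a := ⟨i - c / r, (Nat.sub_le _ _).trans_lt i.2⟩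
    exact congrArg₂ (· * ·) (symbolCoeff_val c k).symm (Fin.val_injective.extend_apply α 0 k).symm
  · rfl

theorem IsStaircase.determines_symbolCoeff {Fsub : ℕ → Subfield K} (hmono : Monotone Fsub)
    (hC : ∀ i j, C i j ∈ Fsub 0) (hCns : AllSquareSubmatricesNonsingular C)
    (hα01 : ∀ j : Fin a, (j : ℕ) ≤ 1 → α j ∈ Fsub j ∧ α j ≠ 0)
    (hαmem : ∀ j : Fin a, 2 ≤ (j : ℕ) → α j ∈ Fsub j ∧ α j ∉ Fsub (j - 1))
    {b : ℕ} {S : Finset (Fin (a * (r + 1)))} {R T : Finset ℕ}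
    (h : IsStaircase (symbolBlock r) a b S R T) :
    Determines S (staircaseRows (symbolBlock r) (symbolCoeff C) (Function.extend Fin.val α 0)
      b R T) := by
  have hα (j : Fin a) : Function.extend Fin.val α 0 j = α j := Fin.val_injective.extend_apply α 0 j
  refine h.determines hmono (fun c ↦ extend_val_mem (F := fun _ ↦ Fsub 0) (hC _))
    (extend_val_mem fun j ↦ ?_) (fun k hk hk1 ↦ ?_) (fun k hk hk2 ↦ ?_) hCns.determines_symbolCoeff
  · exact (le_or_gt j.val 1).elim (hα01 j · |>.1) (hαmem j · |>.1)
  · exact hα ⟨k, hk⟩ ▸ (hα01 ⟨k, hk⟩ hk1).2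
  · exact hα ⟨k, hk⟩ ▸ (hαmem ⟨k, hk⟩ hk2).2

theorem sum_parityRow_eq_zero {z : Fin (a * (r + 1)) → K} (hz : z ∈ starCode (gammaMatrix C α))
    {S : Finset (Fin (a * (r + 1)))} {i : ℕ} (hi : i < a) (hS : ∀ c ∈ S, (c : ℕ) < a * r)
    (hdata : ∀ c ∉ S, (c : ℕ) < a * r → symbolBlock r c ≤ i → z c = 0)
    (hparity : ∀ c : Fin (a * (r + 1)), (c : ℕ) = a * r + i → z c = 0) :
    ∑ c ∈ S, parityRow (symbolBlock r) (symbolCoeff C) (Function.extend Fin.val α 0) i c * z c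
      = 0 := by
  have hrow : ∑ c, starH (gammaMatrix C α) ⟨i, hi⟩ c * z c = 0 := congrFun hz ⟨i, hi⟩
  rw [← sum_subset S.subset_univ fun c _ hcS ↦ ?_] at hrow
  · rw [← hrow]
    exact sum_congr rfl fun c hc ↦ by rw [starH_gammaMatrix_of_lt (hS c hc)]
  rcases lt_or_ge (c : ℕ) (a * r) with hc | hc
  · rw [starH_gammaMatrix_of_lt hc, parityRow]
    split_ifs with hci
    · rw [hdata c hcS hc hci, mul_zero]
    · rw [zero_mul]
  · rw [starH, Matrix.of_apply, dif_neg hc.not_gt]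
    split_ifs with hci
    · rw [hparity c (by simp only at hci; omega), mul_zero]
    · rw [zero_mul]

end

theorem starCode_punctured_recovery_general (Fsub : ℕ → Subfield K) (hmono : Monotone Fsub)
    (C : Matrix (Fin r) (Fin a) K) (hC : ∀ i j, C i j ∈ Fsub 0)
    (hCns : AllSquareSubmatricesNonsingular C) (α : Fin a → K)
    (hα01 : ∀ j : Fin a, (j : ℕ) ≤ 1 → α j ∈ Fsub j ∧ α j ≠ 0)
    (hαmem : ∀ j : Fin a, 2 ≤ (j : ℕ) → α j ∈ Fsub j ∧ α j ∉ Fsub (j - 1))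
    (h : ℕ) (hha : h ≤ a) (E : Finset (Fin (a * (r + 1)))) (hEcard : #E ≤ h)
    (x y : Fin (a * (r + 1)) → K) (hx : x ∈ starCode (gammaMatrix C α))
    (hy : y ∈ starCode (gammaMatrix C α))
    (hxy : ∀ j : Fin (a * (r + 1)),
      ((j : ℕ) < h * r ∨ (a * r ≤ (j : ℕ) ∧ (j : ℕ) < a * r + h)) → j ∉ E → x j = y j) :
    ∀ i ∈ E, (i : ℕ) < r → x i = y i := by
  intro i hiE hir
  have : NeZero r := ⟨by omega⟩
  have hhr : h * r ≤ a * r := Nat.mul_le_mul_right r hha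
  have hi0 : symbolBlock r i = 0 := Nat.div_eq_of_lt hir
  have hih : (i : ℕ) < h * r :=
    hir.trans_le (Nat.le_mul_of_pos_left r ((card_pos.2 ⟨i, hiE⟩).trans_le hEcard))
  obtain ⟨k, hk, hstair⟩ := exists_isStaircase_prefix (blk := symbolBlock r)
    ((filter_subset _ _).trans (range_mono hha)) (card_filter_lt_le_card_filter_range hEcard hhr)
    ⟨i, mem_filter.2 ⟨hiE, hih⟩, hi0⟩
  refine sub_eq_zero.1 (hstair.determines_symbolCoeff hmono hC hCns hα01 hαmem (x - y) ?_ i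
    (by simp [hiE, hih, hi0, hk]))
  rintro _ (⟨j, hj, rfl⟩ | ⟨t, ht, -⟩)
  · simp only [coe_filter, mem_filter, mem_range, Set.mem_ofPred_eq] at hj
    obtain ⟨⟨hjh, hjE⟩, hjk⟩ := hj
    refine sum_parityRow_eq_zero (sub_mem_starCode hx hy) (hjh.trans_le hha)
      (fun c hc ↦ ?_) (fun c hcS _ hcj ↦ ?_) (fun c hc ↦ ?_)
    · exact (mem_filter.1 (mem_filter.1 hc).1).2.trans_le hhr
    · have hch : (c : ℕ) < h * r := (Nat.div_lt_iff_lt_mul (NeZero.pos r)).1 (hcj.trans_lt hjh)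
      exact sub_eq_zero.2 (hxy c (.inl hch) fun hcE ↦ hcS (by simp [hcE, hch, hcj.trans_lt hjk]))
    · exact sub_eq_zero.2 (hxy c (.inr (by omega)) fun hcE ↦ hjE c hcE hc)
  · exact absurd ht (notMem_empty t)

end StarCode

/-- Punctured erasure recovery for `C*_{a,r}`: with
`W = {0,…,hr-1} ∪ {ar,…,ar+h-1}`, for any erasure set `E ⊆ W` with `|E| = h`,
the code symbols with indices in `E ∩ {0,…,r-1}` are uniquely determined by the
code symbols indexed by `W \ E` alone. -/
theorem starCode_punctured_recovery
    (K : Type) [Field K] [Fintype K] (q a r : ℕ)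
    (hq : IsPrimePow q) (ha : 2 ≤ a) (hr : 1 ≤ r)
    (Fsub : ℕ → Subfield K) (hmono : Monotone Fsub)
    (hcard : ∀ j ≤ a - 1, Nat.card (Fsub j) = q ^ 2 ^ (j - 1))
    (htop : Fsub (a - 1) = ⊤)
    (C : Matrix (Fin r) (Fin a) K) (hC : ∀ i j, C i j ∈ Fsub 0)
    (hCns : AllSquareSubmatricesNonsingular C)
    (α : Fin a → K)
    (hα01 : ∀ j : Fin a, (j : ℕ) ≤ 1 → α j = 1)
    (hαmem : ∀ j : Fin a, 2 ≤ (j : ℕ) → α j ∈ Fsub (j : ℕ) ∧ α j ∉ Fsub ((j : ℕ) - 1))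
    (h : ℕ) (hh1 : 1 ≤ h) (hha : h ≤ a)
    (E : Finset (Fin (a * (r + 1)))) (hEcard : E.card = h)
    (hEW : ∀ j ∈ E, (j : ℕ) < h * r ∨ (a * r ≤ (j : ℕ) ∧ (j : ℕ) < a * r + h)) :
    ∀ x y : Fin (a * (r + 1)) → K,
      x ∈ starCode (gammaMatrix C α) → y ∈ starCode (gammaMatrix C α) →
      (∀ j : Fin (a * (r + 1)),
        ((j : ℕ) < h * r ∨ (a * r ≤ (j : ℕ) ∧ (j : ℕ) < a * r + h)) → j ∉ E →
        x j = y j) →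
      ∀ i ∈ E, (i : ℕ) < r → x i = y i := by
  exact starCode_punctured_recovery_general Fsub hmono C hC hCns α
    (fun j hj ↦ by simp [hα01 j hj]) hαmem h hha E hEcard.le
end
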